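/- arXiv:1805.00260 — 4 statements merged into one kernel-verified Lean document; each statement's English description precedes it below -/
import Mathlib

section
/- For every integer r ≥ 2: (i) if G is a (4,4r)-biregular bipartite graph, then r + 1 ≤ š(G) ≤ r² + 1; (ii) if G is a (4r−4,4r)-biregular bipartite graph, then š(G) ≤ r² + 1. -/
open SimpleGraph Finset

/-- A proper edge coloring of `G` with colors in `ℕ`: distinct edges of `G`
sharing an endpoint receive distinct colors. -/
def IsProperEdgeColoring {V : Type*} (G : SimpleGraph V) (c : Sym2 V → ℕ) : Prop :=
  ∀ e₁ ∈ G.edgeSet, ∀ e₂ ∈ G.edgeSet, e₁ ≠ e₂ → (∃ v, v ∈ e₁ ∧ v ∈ e₂) → c e₁ ≠ c e₂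

/-- The palette of a vertex `v`: the set of colors appearing on edges of `G` incident with `v`. -/
def palette {V : Type*} (G : SimpleGraph V) (c : Sym2 V → ℕ) (v : V) : Set ℕ :=
  {n | ∃ e ∈ G.edgeSet, v ∈ e ∧ c e = n}

/-- The palette index of `G`: the minimum number of distinct palettes occurring in a
proper edge coloring of `G`. -/
noncomputable def paletteIndex {V : Type*} (G : SimpleGraph V) : ℕ :=
  sInf {k | ∃ c : Sym2 V → ℕ, IsProperEdgeColoring G c ∧ (Set.range (palette G c)).ncard = k}

/-- `G` is `(a,b)`-biregular: bipartite with nonempty parts `(X, Y)` such that every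
vertex in `X` has degree `a` and every vertex in `Y` has degree `b`. -/
def IsBiregular {V : Type*} [Fintype V] (G : SimpleGraph V) [DecidableRel G.Adj] (a b : ℕ) : Prop :=
  ∃ X Y : Finset V, X.Nonempty ∧ Y.Nonempty ∧ Disjoint X Y ∧ (∀ v : V, v ∈ X ∨ v ∈ Y) ∧
    (∀ v w, G.Adj v w → (v ∈ X ∧ w ∈ Y) ∨ (v ∈ Y ∧ w ∈ X)) ∧
    (∀ v ∈ X, G.degree v = a) ∧ (∀ v ∈ Y, G.degree v = b)


open Classical in
lemma pi_count {E α : Type*} (F : Finset E) (s : E → α) (k : ℕ) (S : Finset α)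
    (h : ∀ a ∈ S, #{e ∈ F | s e = a} = k) : #{e ∈ F | s e ∈ S} = k * #S := by
  rw [Finset.card_eq_sum_card_fiberwise (f := s) (t := S) (s := {e ∈ F | s e ∈ S})
    (fun e he => by simpa using (Finset.mem_filter.1 he).2)]
  rw [Finset.sum_congr rfl (g := fun _ => k), Finset.sum_const, smul_eq_mul, mul_comm]
  intro a ha
  rw [← h a ha, Finset.filter_filter]
  congr 1
  ext e
  simp only [Finset.mem_filter]
  constructor
  · rintro ⟨h1, h2, h3⟩; exact ⟨h1, h3⟩
  · rintro ⟨h1, h3⟩; exact ⟨h1, h3 ▸ ha, h3⟩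

open Classical in
lemma pi_konig {E α β : Type*} (s : E → α) (t : E → β) (A : Finset α) (B : Finset β) (k : ℕ) :
    ∀ F : Finset E, (∀ e ∈ F, s e ∈ A) → (∀ e ∈ F, t e ∈ B) →
    (∀ a ∈ A, #{e ∈ F | s e = a} = k) → (∀ b ∈ B, #{e ∈ F | t e = b} = k) →
    ∃ c : E → ℕ, (∀ e ∈ F, c e < k) ∧
      (∀ e ∈ F, ∀ e' ∈ F, c e = c e' → s e = s e' → e = e') ∧
      (∀ e ∈ F, ∀ e' ∈ F, c e = c e' → t e = t e' → e = e') := by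
  induction k with
  | zero =>
    intro F hsA htB hs ht
    have hF : ∀ e, e ∉ F := by
      intro e he
      have := hs (s e) (hsA e he)
      rw [Finset.card_eq_zero] at this
      have h2 : e ∈ ({e' ∈ F | s e' = s e} : Finset E) := by simp [he]
      rw [this] at h2
      simp at h2
    exact ⟨fun _ => 0, fun e he => (hF e he).elim, fun e he => (hF e he).elim,
      fun e he => (hF e he).elim⟩
  | succ k ih =>
    intro F hsA htB hs ht
    have cA : #F = (k+1) * #A := by
      rw [← pi_count F s (k+1) A hs, Finset.filter_true_of_mem hsA]
    have cB : #F = (k+1) * #B := by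
      rw [← pi_count F t (k+1) B ht, Finset.filter_true_of_mem htB]
    have hAB : #A = #B := Nat.eq_of_mul_eq_mul_left (Nat.succ_pos k) (cA.symm.trans cB)
    have hall := (Finset.all_card_le_biUnion_card_iff_exists_injective
      (fun a : A => ({e ∈ F | s e = a.1} : Finset E).image t)).1 (by
        intro S
        set N := S.biUnion (fun a : A => ({e ∈ F | s e = a.1} : Finset E).image t) with hN
        have hNB : N ⊆ B := by
          intro b hb
          simp only [hN, Finset.mem_biUnion, Finset.mem_image, Finset.mem_filter] at hb
          obtain ⟨a, _, e, ⟨he, _⟩, rfl⟩ := hb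
          exact htB e he
        have h1 := pi_count F s (k+1) (S.image Subtype.val) (by
          intro a ha
          obtain ⟨a, _, rfl⟩ := Finset.mem_image.1 ha
          exact hs _ a.2)
        have h2 := pi_count F t (k+1) N (fun b hb => ht b (hNB hb))
        rw [Finset.card_image_of_injective _ Subtype.val_injective] at h1
        have h3 : #{e ∈ F | s e ∈ S.image Subtype.val} ≤ #{e ∈ F | t e ∈ N} := by
          apply Finset.card_le_card
          intro e he
          simp only [Finset.mem_filter, Finset.mem_image] at he ⊢
          obtain ⟨he, a, ha, hae⟩ := he
          refine ⟨he, ?_⟩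
          simp only [hN, Finset.mem_biUnion, Finset.mem_image, Finset.mem_filter]
          exact ⟨a, ha, e, ⟨he, hae.symm⟩, rfl⟩
        rw [h1, h2] at h3
        exact Nat.le_of_mul_le_mul_left h3 (Nat.succ_pos k))
    obtain ⟨f, finj, hf⟩ := hall
    simp only [Finset.mem_image, Finset.mem_filter] at hf
    choose m hm hmt using hf
    have msur : ∀ b ∈ B, ∃ a, t (m a) = b := by
      intro b hb
      have : Finset.univ.image f = B := by
        apply Finset.eq_of_subset_of_card_le
        · intro b hb
          obtain ⟨a, _, rfl⟩ := Finset.mem_image.1 hb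
          rw [← hmt]; exact htB _ (hm a).1
        · rw [Finset.card_image_of_injective _ finj]
          simp [hAB]
      rw [← this] at hb
      obtain ⟨a, _, rfl⟩ := Finset.mem_image.1 hb
      exact ⟨a, hmt a⟩
    set M : Finset E := Finset.univ.image m with hM
    have sM : ∀ e ∈ M, ∀ e' ∈ M, s e = s e' → e = e' := by
      intro e he e' he' h
      obtain ⟨a, _, rfl⟩ := Finset.mem_image.1 he
      obtain ⟨a', _, rfl⟩ := Finset.mem_image.1 he'
      rw [(hm a).2, (hm a').2] at h
      rw [Subtype.ext h]
    have tM : ∀ e ∈ M, ∀ e' ∈ M, t e = t e' → e = e' := by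
      intro e he e' he' h
      obtain ⟨a, _, rfl⟩ := Finset.mem_image.1 he
      obtain ⟨a', _, rfl⟩ := Finset.mem_image.1 he'
      rw [hmt, hmt] at h
      rw [finj h]
    have key : ∀ {γ : Type _} (u : E → γ) (x : γ), #{e ∈ F | u e = x} = k + 1 →
        (∃ e ∈ M, e ∈ F ∧ u e = x) → (∀ e ∈ M, ∀ e' ∈ M, u e = u e' → e = e') →
        #{e ∈ F \ M | u e = x} = k := by
      intro γ u x h1 ⟨e, heM, heF, hex⟩ h2
      have : ({e ∈ F \ M | u e = x} : Finset E) = ({e ∈ F | u e = x} : Finset E).erase e := by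
        ext e'
        simp only [Finset.mem_filter, Finset.mem_sdiff, Finset.mem_erase]
        constructor
        · rintro ⟨⟨a, b⟩, c⟩
          exact ⟨fun h => b (h ▸ heM), a, c⟩
        · rintro ⟨a, b, c⟩
          exact ⟨⟨b, fun h => a (h2 _ h _ heM (c.trans hex.symm))⟩, c⟩
      rw [this, Finset.card_erase_of_mem (by simp [heF, hex]), h1]
      rfl
    have key2 : ∀ {γ : Type _} (u : E → γ) (x : γ), #{e ∈ F | u e = x} = k + 1 →
        (∃ e ∈ M, e ∈ F ∧ u e = x) → (∀ e ∈ M, ∀ e' ∈ M, u e = u e' → e = e') →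
        #{e ∈ F \ M | u e = x} = k := by
      intro γ u x h1 ⟨e, heM, heF, hex⟩ h2
      have : ({e ∈ F \ M | u e = x} : Finset E) = ({e ∈ F | u e = x} : Finset E).erase e := by
        ext e'
        simp only [Finset.mem_filter, Finset.mem_sdiff, Finset.mem_erase]
        constructor
        · rintro ⟨⟨a, b⟩, c⟩
          exact ⟨fun h => b (h ▸ heM), a, c⟩
        · rintro ⟨a, b, c⟩
          exact ⟨⟨b, fun h => a (h2 _ h _ heM (c.trans hex.symm))⟩, c⟩
      rw [this, Finset.card_erase_of_mem (by simp [heF, hex]), h1]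
      rfl
    obtain ⟨c, c1, c2, c3⟩ := ih (F \ M) (fun e he => hsA e (Finset.mem_sdiff.1 he).1)
      (fun e he => htB e (Finset.mem_sdiff.1 he).1)
      (fun a ha => key s a (hs a ha)
        ⟨m ⟨a, ha⟩, Finset.mem_image_of_mem _ (Finset.mem_univ _), (hm _).1, (hm _).2⟩ sM)
      (fun b hb => by
        obtain ⟨a, ha⟩ := msur b hb
        exact key2 t b (ht b hb)
          ⟨m a, Finset.mem_image_of_mem _ (Finset.mem_univ _), (hm _).1, ha⟩ tM)
    have c1' : ∀ e ∈ F, e ∉ M → c e < k := fun e he h => c1 e (Finset.mem_sdiff.2 ⟨he, h⟩)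
    refine ⟨fun e => if e ∈ M then k else c e, ?_, ?_, ?_⟩
    · intro e he
      dsimp only
      split_ifs with h
      · omega
      · have := c1' e he h; omega
    · intro e he e' he' h1 h2
      dsimp only at h1
      split_ifs at h1 with h h' h'
      · exact sM _ h _ h' h2
      · have := c1' _ he' h'; omega
      · have := c1' _ he h; omega
      · exact c2 _ (Finset.mem_sdiff.2 ⟨he, h⟩) _ (Finset.mem_sdiff.2 ⟨he', h'⟩) h1 h2
    · intro e he e' he' h1 h2
      dsimp only at h1
      split_ifs at h1 with h h' h'
      · exact tM _ h _ h' h2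
      · have := c1' _ he' h'; omega
      · have := c1' _ he h; omega
      · exact c3 _ (Finset.mem_sdiff.2 ⟨he, h⟩) _ (Finset.mem_sdiff.2 ⟨he', h'⟩) h1 h2

open Classical in
lemma pi_split1 {E : Type*} (k m : ℕ) : ∀ S : Finset E, #S = k * m →
    ∃ g : E → ℕ, (∀ e ∈ S, g e < m) ∧ ∀ i < m, #{e ∈ S | g e = i} = k := by
  induction m with
  | zero =>
    intro S h
    have : S = ∅ := by simpa using h
    subst this
    exact ⟨fun _ => 0, by simp, by simp⟩
  | succ m ih =>
    intro S h
    obtain ⟨T, hTS, hT⟩ := Finset.exists_subset_card_eq (s := S) (n := k) (by rw [h]; nlinarith)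
    obtain ⟨g, g1, g2⟩ := ih (S \ T) (by
      rw [Finset.card_sdiff_of_subset hTS, h, hT, Nat.mul_succ]; omega)
    refine ⟨fun e => if e ∈ T then m else g e, ?_, ?_⟩
    · intro e he
      dsimp only
      split_ifs with h
      · omega
      · have := g1 e (Finset.mem_sdiff.2 ⟨he, h⟩); omega
    · intro i hi
      by_cases him : i = m
      · subst him
        rw [← hT]
        congr 1
        ext e
        simp only [Finset.mem_filter]
        constructor
        · rintro ⟨he, h2⟩
          by_contra h
          rw [if_neg h] at h2
          have := g1 e (Finset.mem_sdiff.2 ⟨he, h⟩); omega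
        · intro he; exact ⟨hTS he, if_pos he⟩
      · rw [← g2 i (by omega)]
        congr 1
        ext e
        simp only [Finset.mem_filter, Finset.mem_sdiff]
        constructor
        · rintro ⟨he, h2⟩
          by_cases h : e ∈ T
          · rw [if_pos h] at h2; omega
          · rw [if_neg h] at h2; exact ⟨⟨he, h⟩, h2⟩
        · rintro ⟨⟨he, h⟩, h2⟩
          exact ⟨he, by rw [if_neg h]; exact h2⟩

open Classical in
lemma pi_split2 {E α : Type*} (F : Finset E) (s : E → α) (A : Finset α) (k m : ℕ)
    (hsA : ∀ e ∈ F, s e ∈ A) (hs : ∀ a ∈ A, #{e ∈ F | s e = a} = k * m) :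
    ∃ g : E → ℕ, (∀ e ∈ F, g e < m) ∧
      ∀ a ∈ A, ∀ i < m, #{e ∈ F | s e = a ∧ g e = i} = k := by
  have : ∀ a, ∃ g : E → ℕ, a ∈ A → (∀ e ∈ F, s e = a → g e < m) ∧
      ∀ i < m, #{e ∈ F | s e = a ∧ g e = i} = k := by
    intro a
    by_cases ha : a ∈ A
    · obtain ⟨g, g1, g2⟩ := pi_split1 k m _ (hs a ha)
      refine ⟨g, fun _ => ⟨fun e he h => g1 e (by simp [he, h]), fun i hi => ?_⟩⟩
      rw [← g2 i hi, Finset.filter_filter]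
    · exact ⟨fun _ => 0, fun h => (ha h).elim⟩
  choose g hg using this
  refine ⟨fun e => g (s e) e, fun e he => (hg _ (hsA e he)).1 e he rfl, fun a ha i hi => ?_⟩
  rw [← (hg a ha).2 i hi]
  congr 1
  ext e
  simp only [Finset.mem_filter]
  constructor
  · rintro ⟨h1, rfl, h2⟩; exact ⟨h1, rfl, h2⟩
  · rintro ⟨h1, rfl, h2⟩; exact ⟨h1, rfl, h2⟩

/-- If a coloring with `k` colors is injective on a set of size `k`, each color occurs once. -/
lemma pi_once {E : Type*} [DecidableEq E] (S : Finset E) (c : E → ℕ) (k : ℕ) (hS : #S = k)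
    (h1 : ∀ e ∈ S, c e < k) (h2 : ∀ e ∈ S, ∀ e' ∈ S, c e = c e' → e = e') (j : ℕ) (hj : j < k) :
    #{e ∈ S | c e = j} = 1 := by
  have himg : S.image c = Finset.range k := by
    apply Finset.eq_of_subset_of_card_le
    · intro x hx
      obtain ⟨e, he, rfl⟩ := Finset.mem_image.1 hx
      exact Finset.mem_range.2 (h1 e he)
    · rw [Finset.card_image_of_injOn (fun e he e' he' h => h2 e he e' he' h)]
      simp [hS]
  have : j ∈ S.image c := by rw [himg]; exact Finset.mem_range.2 hj
  obtain ⟨e, he, hej⟩ := Finset.mem_image.1 this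
  rw [Finset.card_eq_one]
  refine ⟨e, ?_⟩
  ext e'
  simp only [Finset.mem_filter, Finset.mem_singleton]
  constructor
  · rintro ⟨a, b⟩; exact h2 _ a _ he (b.trans hej.symm)
  · rintro rfl; exact ⟨he, hej⟩

open Classical in
lemma pi_agg {E α : Type*} (F : Finset E) (s : E → α) (a : α) (g c : E → ℕ) (k m : ℕ)
    (g1 : ∀ e ∈ F, g e < m) (g2 : ∀ i < m, #{e ∈ F | s e = a ∧ g e = i} = k)
    (c1 : ∀ e ∈ F, c e < k)
    (c2 : ∀ e ∈ F, ∀ e' ∈ F, c e = c e' → (s e, g e) = (s e', g e') → e = e')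
    (j : ℕ) (hj : j < k) : #{e ∈ F | s e = a ∧ c e = j} = m := by
  rw [Finset.card_eq_sum_card_fiberwise (f := g) (t := Finset.range m)
    (fun e he => by
      have := g1 e (Finset.mem_filter.1 (Finset.mem_coe.1 he)).1
      simpa using this)]
  rw [Finset.sum_congr rfl (g := fun _ => 1)]
  · simp
  · intro i hi
    have hi := Finset.mem_range.1 hi
    rw [← pi_once _ c k (g2 i hi) (fun e he => c1 e (Finset.mem_filter.1 he).1) (by
      intro e he e' he' h
      obtain ⟨he, h1, h2⟩ := Finset.mem_filter.1 he
      obtain ⟨he', h1', h2'⟩ := Finset.mem_filter.1 he'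
      exact c2 e he e' he' h (by rw [h1, h2, h1', h2'])) j hj]
    congr 1
    ext e
    simp only [Finset.mem_filter]
    tauto

open Classical in
lemma pi_equi {E α β : Type*} (s : E → α) (t : E → β) (A : Finset α) (B : Finset β) (k m n : ℕ)
    (F : Finset E) (hsA : ∀ e ∈ F, s e ∈ A) (htB : ∀ e ∈ F, t e ∈ B)
    (hs : ∀ a ∈ A, #{e ∈ F | s e = a} = k * m) (ht : ∀ b ∈ B, #{e ∈ F | t e = b} = k * n) :
    ∃ c : E → ℕ, (∀ e ∈ F, c e < k) ∧
      (∀ a ∈ A, ∀ j < k, #{e ∈ F | s e = a ∧ c e = j} = m) ∧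
      (∀ b ∈ B, ∀ j < k, #{e ∈ F | t e = b ∧ c e = j} = n) := by
  obtain ⟨g, g1, g2⟩ := pi_split2 F s A k m hsA hs
  obtain ⟨h, h1, h2⟩ := pi_split2 F t B k n htB ht
  obtain ⟨c, c1, c2, c3⟩ := pi_konig (fun e => (s e, g e)) (fun e => (t e, h e))
    (A ×ˢ Finset.range m) (B ×ˢ Finset.range n) k F
    (fun e he => by simp [hsA e he, g1 e he])
    (fun e he => by simp [htB e he, h1 e he])
    (by
      rintro ⟨a, i⟩ hai
      simp only [Finset.mem_product, Finset.mem_range] at hai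
      simp only [Prod.mk.injEq]
      exact g2 a hai.1 i hai.2)
    (by
      rintro ⟨a, i⟩ hai
      simp only [Finset.mem_product, Finset.mem_range] at hai
      simp only [Prod.mk.injEq]
      exact h2 a hai.1 i hai.2)
  exact ⟨c, c1, fun a ha j hj => pi_agg F s a g c k m g1 (g2 a ha) c1 c2 j hj,
    fun b hb j hj => pi_agg F t b h c k n h1 (h2 b hb) c1 c3 j hj⟩

/-- Symmetric edge coloring built from a two-argument function on `X × Y`. -/
noncomputable def pi_col {V : Type*} (X Y : Finset V) (d : V → V → ℕ) : Sym2 V → ℕ :=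
  open Classical in
  Sym2.lift ⟨fun v w => (if v ∈ X ∧ w ∈ Y then d v w else 0) +
    (if w ∈ X ∧ v ∈ Y then d w v else 0), fun _ _ => add_comm _ _⟩

lemma pi_col_eq {V : Type*} (X Y : Finset V) (hXY : Disjoint X Y) (d : V → V → ℕ) (x y : V)
    (hx : x ∈ X) (hy : y ∈ Y) : pi_col X Y d s(x, y) = d x y := by
  have h := Finset.disjoint_left.1 hXY hx
  simp [pi_col, hx, hy, h]

lemma pi_palette_card {V : Type*} [Fintype V] (G : SimpleGraph V) [DecidableRel G.Adj]
    (c : Sym2 V → ℕ) (hc : IsProperEdgeColoring G c) (v : V) :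
    (palette G c v).ncard = G.degree v ∧ (palette G c v).Finite := by
  classical
  have h : palette G c v = ((G.neighborFinset v).image (fun w => c s(v, w)) : Finset ℕ) := by
    ext n
    simp only [palette, Set.mem_ofPred_eq, Finset.coe_image, Set.mem_image, Finset.mem_coe,
      SimpleGraph.mem_neighborFinset]
    constructor
    · rintro ⟨e, he, hv, rfl⟩
      obtain ⟨w, rfl⟩ := Sym2.mem_iff_exists.1 hv
      exact ⟨w, he, rfl⟩
    · rintro ⟨w, hw, rfl⟩
      exact ⟨s(v, w), hw, by simp, rfl⟩
  rw [h]
  refine ⟨?_, Finset.finite_toSet _⟩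
  rw [Set.ncard_coe_finset, Finset.card_image_of_injOn, SimpleGraph.card_neighborFinset_eq_degree]
  intro w hw w' hw' hww
  by_contra hne
  simp only [Finset.mem_coe, SimpleGraph.mem_neighborFinset] at hw hw'
  refine hc s(v, w) hw s(v, w') hw' ?_ ⟨v, by simp, by simp⟩ hww
  intro h
  exact hne (Sym2.congr_right.1 h)

lemma pi_upper {V : Type*} [Fintype V] (G : SimpleGraph V) [DecidableRel G.Adj]
    (X Y : Finset V) (hXY : Disjoint X Y)
    (hG : ∀ v w, G.Adj v w → (v ∈ X ∧ w ∈ Y) ∨ (v ∈ Y ∧ w ∈ X))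
    (d : V → V → ℕ) (T : V → Finset ℕ)
    (d1 : ∀ x ∈ X, ∀ y ∈ Y, ∀ y' ∈ Y, G.Adj x y → G.Adj x y' → d x y = d x y' → y = y')
    (d2 : ∀ y ∈ Y, ∀ x ∈ X, ∀ x' ∈ X, G.Adj x y → G.Adj x' y → d x y = d x' y → x = x')
    (dT : ∀ x ∈ X, ∀ y ∈ Y, G.Adj x y → d x y ∈ T x ∧ d x y ∈ T y)
    (hT : ∀ v, #(T v) ≤ G.degree v) (P : Finset (Finset ℕ)) (hP : ∀ v, T v ∈ P) :
    ∃ c, IsProperEdgeColoring G c ∧ (Set.range (palette G c)).ncard ≤ #P := by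
  classical
  have hc : ∀ x ∈ X, ∀ y ∈ Y, pi_col X Y d s(x, y) = d x y :=
    fun x hx y hy => pi_col_eq X Y hXY d x y hx hy
  have hc' : ∀ x ∈ X, ∀ y ∈ Y, pi_col X Y d s(y, x) = d x y := by
    intro x hx y hy
    rw [Sym2.eq_swap]; exact hc x hx y hy
  have hprop : IsProperEdgeColoring G (pi_col X Y d) := by
    rintro e₁ h1 e₂ h2 hne ⟨v, hv1, hv2⟩ heq
    obtain ⟨w, rfl⟩ := Sym2.mem_iff_exists.1 hv1
    obtain ⟨w', rfl⟩ := Sym2.mem_iff_exists.1 hv2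
    rw [SimpleGraph.mem_edgeSet] at h1 h2
    apply hne
    rcases hG _ _ h1 with ⟨a, b⟩ | ⟨a, b⟩ <;> rcases hG _ _ h2 with ⟨a', b'⟩ | ⟨a', b'⟩
    · rw [hc _ a _ b, hc _ a _ b'] at heq
      rw [d1 v a w b w' b' h1 h2 heq]
    · exact (Finset.disjoint_left.1 hXY a a').elim
    · exact (Finset.disjoint_left.1 hXY a' a).elim
    · rw [hc' _ b _ a, hc' _ b' _ a] at heq
      rw [d2 v a w b w' b' h1.symm h2.symm heq]
  refine ⟨pi_col X Y d, hprop, ?_⟩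
  have hpal : ∀ v, palette G (pi_col X Y d) v = (T v : Set ℕ) := by
    intro v
    apply Set.eq_of_subset_of_ncard_le
    · rintro n ⟨e, he, hv, rfl⟩
      obtain ⟨w, rfl⟩ := Sym2.mem_iff_exists.1 hv
      rw [SimpleGraph.mem_edgeSet] at he
      rcases hG _ _ he with ⟨a, b⟩ | ⟨a, b⟩
      · rw [hc _ a _ b]; exact (dT _ a _ b he).1
      · rw [hc' _ b _ a]; exact (dT _ b _ a he.symm).2
    · rw [Set.ncard_coe_finset, (pi_palette_card G _ hprop v).1]; exact hT v
    · exact Finset.finite_toSet _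
  have : Set.range (palette G (pi_col X Y d)) ⊆
      ((P.image (fun S : Finset ℕ => (S : Set ℕ)) : Finset (Set ℕ)) : Set (Set ℕ)) := by
    rintro _ ⟨v, rfl⟩
    rw [hpal]
    simp only [Finset.coe_image, Set.mem_image, Finset.mem_coe]
    exact ⟨T v, hP v, rfl⟩
  calc _ ≤ _ := Set.ncard_le_ncard this (Finset.finite_toSet _)
    _ ≤ #P := by rw [Set.ncard_coe_finset]; exact Finset.card_image_le

lemma pi_lower {V : Type*} [Fintype V] (G : SimpleGraph V) [DecidableRel G.Adj]
    (r : ℕ) (hr : 2 ≤ r) (X Y : Finset V) (hY : Y.Nonempty)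
    (hXY : Disjoint X Y)
    (hG : ∀ v w, G.Adj v w → (v ∈ X ∧ w ∈ Y) ∨ (v ∈ Y ∧ w ∈ X))
    (hX4 : ∀ v ∈ X, G.degree v = 4) (hY4 : ∀ v ∈ Y, G.degree v = 4 * r)
    (c : Sym2 V → ℕ) (hc : IsProperEdgeColoring G c) :
    r + 1 ≤ (Set.range (palette G c)).ncard := by
  classical
  obtain ⟨y, hy⟩ := hY
  have hfin : ∀ v, (palette G c v).Finite := fun v => (pi_palette_card G c hc v).2
  set p : V → Finset ℕ := fun v => (hfin v).toFinset with hp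
  have hpc : ∀ v, #(p v) = G.degree v := by
    intro v
    rw [← (pi_palette_card G c hc v).1, Set.ncard_eq_toFinset_card _ (hfin v)]
  set Q : Finset (Finset ℕ) := X.image p with hQ
  have h1 : p y ⊆ Q.biUnion id := by
    intro n hn
    simp only [hp, Set.Finite.mem_toFinset] at hn
    obtain ⟨e, he, hv, rfl⟩ := hn
    obtain ⟨w, rfl⟩ := Sym2.mem_iff_exists.1 hv
    have hw : w ∈ X := by
      rcases hG _ _ he with ⟨a, b⟩ | ⟨a, b⟩
      · exact (Finset.disjoint_left.1 hXY a hy).elim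
      · exact b
    simp only [Finset.mem_biUnion, id]
    refine ⟨p w, Finset.mem_image_of_mem _ hw, ?_⟩
    simp only [hp, Set.Finite.mem_toFinset]
    exact ⟨_, he, by simp, rfl⟩
  have h2 : 4 * r ≤ #Q * 4 := by
    rw [← hY4 y hy, ← hpc y]
    refine (Finset.card_le_card h1).trans (Finset.card_biUnion_le_card_mul _ _ _ ?_)
    intro S hS
    obtain ⟨x, hx, rfl⟩ := Finset.mem_image.1 hS
    simp [hpc, hX4 x hx]
  have h3 : p y ∉ Q := by
    intro h
    obtain ⟨x, hx, hxy⟩ := Finset.mem_image.1 h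
    have e1 := hpc x
    rw [hxy, hpc, hX4 x hx, hY4 y hy] at e1
    omega
  have h4 : ((insert (p y) Q).image (fun S : Finset ℕ => (S : Set ℕ)) : Set (Set ℕ)) ⊆
      Set.range (palette G c) := by
    rintro S hS
    simp only [Set.mem_image, Finset.mem_coe, Finset.mem_insert, hQ, Finset.mem_image] at hS
    rcases hS with ⟨S, rfl | ⟨x, hx, rfl⟩, rfl⟩
    · exact ⟨y, by simp [hp]⟩
    · exact ⟨x, by simp [hp]⟩
  have h5 := Set.ncard_le_ncard h4 (Set.finite_range _)
  rw [Set.ncard_coe_finset, Finset.card_image_of_injective _ Finset.coe_injective,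
    Finset.card_insert_of_notMem h3] at h5
  omega

/-- The basic pieces `{4i, 4i+1, 4j+2, 4j+3}`. -/
def piP (i j : ℕ) : Finset ℕ := {4 * i, 4 * i + 1, 4 * j + 2, 4 * j + 3}

lemma piP_card (i j : ℕ) : #(piP i j) = 4 := by
  unfold piP
  rw [Finset.card_insert_of_notMem, Finset.card_insert_of_notMem, Finset.card_insert_of_notMem,
    Finset.card_singleton] <;> simp <;> omega

lemma piP_sub (i j r : ℕ) (hi : i < r) (hj : j < r) : piP i j ⊆ Finset.range (4 * r) := by
  intro n hn
  simp only [piP, Finset.mem_insert, Finset.mem_singleton] at hn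
  rw [Finset.mem_range]
  omega

/-- The edges of `G` as pairs in `X × Y`. -/
noncomputable def piF {V : Type*} (G : SimpleGraph V) (X Y : Finset V) : Finset (V × V) :=
  open Classical in {p ∈ X ×ˢ Y | G.Adj p.1 p.2}

lemma mem_piF {V : Type*} (G : SimpleGraph V) (X Y : Finset V) (x y : V) :
    (x, y) ∈ piF G X Y ↔ x ∈ X ∧ y ∈ Y ∧ G.Adj x y := by
  simp [piF, and_assoc]

open Classical in
lemma piF_equi {V : Type*} [Fintype V] (G : SimpleGraph V) [DecidableRel G.Adj]
    (X Y : Finset V) (hXY : Disjoint X Y) (m n : ℕ)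
    (hG : ∀ v w, G.Adj v w → (v ∈ X ∧ w ∈ Y) ∨ (v ∈ Y ∧ w ∈ X))
    (hX : ∀ v ∈ X, G.degree v = 4 * m) (hY : ∀ v ∈ Y, G.degree v = 4 * n) :
    ∃ c : V × V → ℕ, (∀ e ∈ piF G X Y, c e < 4) ∧
      (∀ x ∈ X, ∀ j < 4, #{e ∈ piF G X Y | e.1 = x ∧ c e = j} = m) ∧
      (∀ y ∈ Y, ∀ j < 4, #{e ∈ piF G X Y | e.2 = y ∧ c e = j} = n) := by
  apply pi_equi Prod.fst Prod.snd X Y 4 m n (piF G X Y)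
  · rintro ⟨x, y⟩ h; exact ((mem_piF _ _ _ _ _).1 h).1
  · rintro ⟨x, y⟩ h; exact ((mem_piF _ _ _ _ _).1 h).2.1
  · intro x hx
    rw [← hX x hx, ← SimpleGraph.card_neighborFinset_eq_degree]
    symm
    apply Finset.card_bij (fun y _ => (x, y))
    · intro y hy
      rw [SimpleGraph.mem_neighborFinset] at hy
      rw [Finset.mem_filter, mem_piF]
      refine ⟨⟨hx, ?_, hy⟩, rfl⟩
      rcases hG _ _ hy with h | h
      · exact h.2
      · exact (Finset.disjoint_left.1 hXY hx h.1).elim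
    · intro a _ b _ h; exact (Prod.mk.inj h).2
    · rintro ⟨x', y⟩ h
      rw [Finset.mem_filter, mem_piF] at h
      obtain ⟨⟨_, _, h⟩, rfl⟩ := h
      exact ⟨y, by rw [SimpleGraph.mem_neighborFinset]; exact h, rfl⟩
  · intro y hy
    rw [← hY y hy, ← SimpleGraph.card_neighborFinset_eq_degree]
    symm
    apply Finset.card_bij (fun x _ => (x, y))
    · intro x hx
      rw [SimpleGraph.mem_neighborFinset] at hx
      rw [Finset.mem_filter, mem_piF]
      refine ⟨⟨?_, hy, hx.symm⟩, rfl⟩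
      rcases hG _ _ hx with h | h
      · exact (Finset.disjoint_left.1 hXY h.1 hy).elim
      · exact h.2
    · intro a _ b _ h; exact (Prod.mk.inj h).1
    · rintro ⟨x, y'⟩ h
      rw [Finset.mem_filter, mem_piF] at h
      obtain ⟨⟨_, _, h⟩, rfl⟩ := h
      exact ⟨x, by rw [SimpleGraph.mem_neighborFinset]; exact h.symm, rfl⟩

open Classical in
lemma pi_case1 {V : Type*} (F : Finset (V × V)) (X Y : Finset V) (r : ℕ)
    (hF : ∀ e ∈ F, e.1 ∈ X ∧ e.2 ∈ Y) (c : V × V → ℕ) (k₀ k₁ : ℕ)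
    (hX₀ : ∀ x ∈ X, #{e ∈ F | e.1 = x ∧ c e = k₀} = 1)
    (hX₁ : ∀ x ∈ X, #{e ∈ F | e.1 = x ∧ c e = k₁} = 1)
    (hY₀ : ∀ y ∈ Y, #{e ∈ F | e.2 = y ∧ c e = k₀} = r)
    (hY₁ : ∀ y ∈ Y, #{e ∈ F | e.2 = y ∧ c e = k₁} = r) :
    ∃ f : V → ℕ, (∀ x ∈ X, f x < r) ∧
      ∀ x x' y, (x, y) ∈ F → (x', y) ∈ F → c (x, y) = c (x', y) →
        (c (x, y) = k₀ ∨ c (x, y) = k₁) → f x = f x' → x = x' := by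
  have aux : ∀ k, (∀ x ∈ X, #{e ∈ F | e.1 = x ∧ c e = k} = 1) →
      (∀ y ∈ Y, #{e ∈ F | e.2 = y ∧ c e = k} = r) →
      ∃ M : V → V, (∀ x ∈ X, M x ∈ Y) ∧ (∀ x y, (x, y) ∈ F → c (x, y) = k → M x = y) ∧
        ∀ y ∈ Y, #{x ∈ X | M x = y} = r := by
    intro k h1 h2
    have : ∀ x, ∃ y, x ∈ X → (x, y) ∈ F ∧ c (x, y) = k ∧
        ∀ y', (x, y') ∈ F → c (x, y') = k → y = y' := by
      intro x
      by_cases hx : x ∈ X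
      · obtain ⟨⟨x', y⟩, he⟩ := Finset.card_eq_one.1 (h1 x hx)
        have h3 : (x', y) ∈ ({e ∈ F | e.1 = x ∧ c e = k} : Finset (V × V)) := by rw [he]; simp
        simp only [Finset.mem_filter] at h3
        obtain ⟨h3, rfl, h4⟩ := h3
        refine ⟨y, fun _ => ⟨h3, h4, fun y' h5 h6 => ?_⟩⟩
        have h7 : (x', y') ∈ ({e ∈ F | e.1 = x' ∧ c e = k} : Finset (V × V)) := by
          simp [h5, h6]
        rw [he] at h7
        simp only [Finset.mem_singleton, Prod.mk.injEq, true_and] at h7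
        exact h7.symm
      · exact ⟨x, fun h => (hx h).elim⟩
    choose M hM using this
    refine ⟨M, fun x hx => (hF _ (hM x hx).1).2,
      fun x y h h' => (hM x (hF _ h).1).2.2 y h h', fun y hy => ?_⟩
    rw [← h2 y hy]
    apply Finset.card_bij (fun x _ => (x, y))
    · intro x hx
      obtain ⟨hx', hxy⟩ := Finset.mem_filter.1 hx
      rw [Finset.mem_filter, ← hxy]
      exact ⟨(hM x hx').1, rfl, (hM x hx').2.1⟩
    · intro a _ b _ h; exact (Prod.mk.inj h).1
    · rintro ⟨x, y'⟩ h
      simp only [Finset.mem_filter] at h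
      obtain ⟨h, rfl, h'⟩ := h
      have hx := (hF _ h).1
      exact ⟨x, by simp only [Finset.mem_filter]; exact ⟨hx, (hM x hx).2.2 _ h h'⟩, rfl⟩
  obtain ⟨M₀, a1, a2, a3⟩ := aux k₀ hX₀ hY₀
  obtain ⟨M₁, b1, b2, b3⟩ := aux k₁ hX₁ hY₁
  obtain ⟨f, f1, f2, f3⟩ := pi_konig M₀ M₁ Y Y r X a1 b1 a3 b3
  refine ⟨f, f1, ?_⟩
  rintro x x' y h h' hc (hk | hk) hf
  · exact f2 x (hF _ h).1 x' (hF _ h').1 hf ((a2 _ _ h hk).trans (a2 _ _ h' (hc ▸ hk)).symm)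
  · exact f3 x (hF _ h).1 x' (hF _ h').1 hf ((b2 _ _ h hk).trans (b2 _ _ h' (hc ▸ hk)).symm)

open Classical in
lemma pi_case2 {V : Type*} (F : Finset (V × V)) (X Y : Finset V) (r : ℕ) (hr : 1 ≤ r)
    (hF : ∀ e ∈ F, e.1 ∈ X ∧ e.2 ∈ Y) (c : V × V → ℕ) (k₀ k₁ : ℕ) (hk : k₀ ≠ k₁)
    (hX₀ : ∀ x ∈ X, #{e ∈ F | e.1 = x ∧ c e = k₀} = r - 1)
    (hX₁ : ∀ x ∈ X, #{e ∈ F | e.1 = x ∧ c e = k₁} = r - 1)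
    (hY₀ : ∀ y ∈ Y, #{e ∈ F | e.2 = y ∧ c e = k₀} = r)
    (hY₁ : ∀ y ∈ Y, #{e ∈ F | e.2 = y ∧ c e = k₁} = r) :
    ∃ (h : V × V → ℕ) (f : V → ℕ), (∀ x ∈ X, f x < r) ∧
      (∀ e ∈ F, (c e = k₀ ∨ c e = k₁) → h e < r ∧ h e ≠ f e.1) ∧
      ∀ e ∈ F, ∀ e' ∈ F, c e = c e' → (c e = k₀ ∨ c e = k₁) → h e = h e' →
        (e.1 = e'.1 ∨ e.2 = e'.2) → e = e' := by
  set s : (V × V) ⊕ V → V ⊕ V := Sum.elim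
    (fun e => if c e = k₀ then Sum.inl e.2 else Sum.inr e.1) (fun x => Sum.inr x) with hs
  set t : (V × V) ⊕ V → V ⊕ V := Sum.elim
    (fun e => if c e = k₀ then Sum.inl e.1 else Sum.inr e.2) (fun x => Sum.inl x) with ht
  set F' : Finset ((V × V) ⊕ V) :=
    ({e ∈ F | c e = k₀ ∨ c e = k₁} : Finset (V × V)).disjSum X with hF'
  have s0 : ∀ e, c e = k₀ → s (Sum.inl e) = Sum.inl e.2 := fun e h => by simp [hs, h]
  have s1 : ∀ e, c e = k₁ → s (Sum.inl e) = Sum.inr e.1 := fun e h => by simp [hs, h, hk.symm]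
  have t0 : ∀ e, c e = k₀ → t (Sum.inl e) = Sum.inl e.1 := fun e h => by simp [ht, h]
  have t1 : ∀ e, c e = k₁ → t (Sum.inl e) = Sum.inr e.2 := fun e h => by simp [ht, h, hk.symm]
  have s2 : ∀ x, s (Sum.inr x) = Sum.inr x := fun x => rfl
  have t2 : ∀ x, t (Sum.inr x) = Sum.inl x := fun x => rfl
  have mF : ∀ e, Sum.inl e ∈ F' ↔ e ∈ F ∧ (c e = k₀ ∨ c e = k₁) := by
    intro e; simp [hF']
  have mX : ∀ x, Sum.inr x ∈ F' ↔ x ∈ X := by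
    intro e; simp [hF']
  have cl : ∀ (S : Finset ((V × V) ⊕ V)) (T : Finset (V × V)),
      (∀ e, Sum.inl e ∈ S ↔ e ∈ T) → (∀ x, Sum.inr x ∉ S) → #S = #T := by
    intro S T h1 h2
    have : S = T.disjSum (∅ : Finset V) := by
      ext (e | x)
      · simp [h1]
      · simp [h2]
    rw [this]; simp
  have cr : ∀ (S : Finset ((V × V) ⊕ V)) (T : Finset (V × V)) (z : V),
      (∀ e, Sum.inl e ∈ S ↔ e ∈ T) → (∀ x, Sum.inr x ∈ S ↔ x = z) → #S = #T + 1 := by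
    intro S T z h1 h2
    have : S = T.disjSum ({z} : Finset V) := by
      ext (e | x)
      · simp [h1]
      · simp [h2]
    rw [this]; simp
  obtain ⟨g, g1, g2, g3⟩ := pi_konig s t (Y.disjSum X) (X.disjSum Y) r F'
    (by
      rintro (e | x) he
      · obtain ⟨he, hc | hc⟩ := (mF e).1 he
        · rw [s0 e hc]; simpa using (hF e he).2
        · rw [s1 e hc]; simpa using (hF e he).1
      · rw [s2]; simpa using (mX x).1 he)
    (by
      rintro (e | x) he
      · obtain ⟨he, hc | hc⟩ := (mF e).1 he
        · rw [t0 e hc]; simpa using (hF e he).1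
        · rw [t1 e hc]; simpa using (hF e he).2
      · rw [t2]; simpa using (mX x).1 he)
    (by
      rintro (y | x) ha
      · have hy : y ∈ Y := by simpa using ha
        rw [← hY₀ y hy]
        apply cl
        · intro e
          simp only [Finset.mem_filter, mF]
          constructor
          · rintro ⟨⟨he, hc | hc⟩, h⟩
            · rw [s0 e hc] at h; exact ⟨he, Sum.inl.inj h, hc⟩
            · rw [s1 e hc] at h; cases h
          · rintro ⟨he, rfl, hc⟩
            exact ⟨⟨he, Or.inl hc⟩, s0 e hc⟩
        · intro x h
          simp [s2] at h
      · have hx : x ∈ X := by simpa using ha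
        have h3 := hX₁ x hx
        rw [cr _ {e ∈ F | e.1 = x ∧ c e = k₁} x, h3]
        · omega
        · intro e
          simp only [Finset.mem_filter, mF]
          constructor
          · rintro ⟨⟨he, hc | hc⟩, h⟩
            · rw [s0 e hc] at h; cases h
            · rw [s1 e hc] at h; exact ⟨he, Sum.inr.inj h, hc⟩
          · rintro ⟨he, rfl, hc⟩
            exact ⟨⟨he, Or.inr hc⟩, s1 e hc⟩
        · intro z
          simp only [Finset.mem_filter, mX, s2, Sum.inr.injEq]
          constructor
          · exact fun h => h.2
          · rintro rfl; exact ⟨hx, rfl⟩)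
    (by
      rintro (x | y) ha
      · have hx : x ∈ X := by simpa using ha
        have h3 := hX₀ x hx
        rw [cr _ {e ∈ F | e.1 = x ∧ c e = k₀} x, h3]
        · omega
        · intro e
          simp only [Finset.mem_filter, mF]
          constructor
          · rintro ⟨⟨he, hc | hc⟩, h⟩
            · rw [t0 e hc] at h; exact ⟨he, Sum.inl.inj h, hc⟩
            · rw [t1 e hc] at h; cases h
          · rintro ⟨he, rfl, hc⟩
            exact ⟨⟨he, Or.inl hc⟩, t0 e hc⟩
        · intro z
          simp only [Finset.mem_filter, mX, t2, Sum.inl.injEq]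
          constructor
          · exact fun h => h.2
          · rintro rfl; exact ⟨hx, rfl⟩
      · have hy : y ∈ Y := by simpa using ha
        rw [← hY₁ y hy]
        apply cl
        · intro e
          simp only [Finset.mem_filter, mF]
          constructor
          · rintro ⟨⟨he, hc | hc⟩, h⟩
            · rw [t0 e hc] at h; cases h
            · rw [t1 e hc] at h; exact ⟨he, Sum.inr.inj h, hc⟩
          · rintro ⟨he, rfl, hc⟩
            exact ⟨⟨he, Or.inr hc⟩, t1 e hc⟩
        · intro x h
          simp [t2] at h)
  refine ⟨fun e => g (Sum.inl e), fun x => g (Sum.inr x), fun x hx => g1 _ ((mX x).2 hx), ?_, ?_⟩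
  · intro e he hc
    have m1 := (mF e).2 ⟨he, hc⟩
    have m2 := (mX e.1).2 (hF e he).1
    refine ⟨g1 _ m1, fun heq => ?_⟩
    rcases hc with hc | hc
    · have := g3 _ m1 _ m2 heq (by rw [t0 e hc, t2])
      cases this
    · have := g2 _ m1 _ m2 heq (by rw [s1 e hc, s2])
      cases this
  · intro e he e' he' hcc hc heq hor
    have m1 := (mF e).2 ⟨he, hc⟩
    have m2 := (mF e').2 ⟨he', hcc ▸ hc⟩
    apply Sum.inl.inj (β := V)
    rcases hc with hc | hc <;> rcases hor with h | h
    · exact g3 _ m1 _ m2 heq (by rw [t0 e hc, t0 e' (hcc ▸ hc), h])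
    · exact g2 _ m1 _ m2 heq (by rw [s0 e hc, s0 e' (hcc ▸ hc), h])
    · exact g2 _ m1 _ m2 heq (by rw [s1 e hc, s1 e' (hcc ▸ hc), h])
    · exact g3 _ m1 _ m2 heq (by rw [t1 e hc, t1 e' (hcc ▸ hc), h])

/-- Bound on the number of palettes. -/
lemma pi_P_card (r : ℕ) (Φ : ℕ → ℕ → Finset ℕ) :
    #(insert (Finset.range (4 * r))
      ((Finset.range r ×ˢ Finset.range r).image (fun p => Φ p.1 p.2))) ≤ r ^ 2 + 1 := by
  refine (Finset.card_insert_le _ _).trans ?_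
  have := Finset.card_image_le (s := Finset.range r ×ˢ Finset.range r) (f := fun p => Φ p.1 p.2)
  rw [Finset.card_product, Finset.card_range] at this
  nlinarith

lemma pi_final {V : Type*} [Fintype V] (G : SimpleGraph V) [DecidableRel G.Adj]
    (X Y : Finset V) (hXY : Disjoint X Y) (hcov : ∀ v : V, v ∈ X ∨ v ∈ Y)
    (hG : ∀ v w, G.Adj v w → (v ∈ X ∧ w ∈ Y) ∨ (v ∈ Y ∧ w ∈ X)) (r : ℕ)
    (hY : ∀ v ∈ Y, G.degree v = 4 * r)
    (c h : V × V → ℕ) (f₀ f₁ : V → ℕ) (Φ : ℕ → ℕ → Finset ℕ)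
    (c4 : ∀ e ∈ piF G X Y, c e < 4)
    (hf₀ : ∀ x ∈ X, f₀ x < r) (hf₁ : ∀ x ∈ X, f₁ x < r)
    (hh : ∀ e ∈ piF G X Y, h e < r)
    (hinj : ∀ e ∈ piF G X Y, ∀ e' ∈ piF G X Y, c e = c e' → h e = h e' →
      (e.1 = e'.1 ∨ e.2 = e'.2) → e = e')
    (hΦ : ∀ e ∈ piF G X Y, 4 * h e + c e ∈ Φ (f₀ e.1) (f₁ e.1))
    (hΦc : ∀ x ∈ X, #(Φ (f₀ x) (f₁ x)) ≤ G.degree x) :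
    ∃ c, IsProperEdgeColoring G c ∧ (Set.range (palette G c)).ncard ≤ r ^ 2 + 1 := by
  classical
  have hYX : ∀ y ∈ Y, y ∉ X := fun y hy hx => Finset.disjoint_left.1 hXY hx hy
  obtain ⟨c', h1, h2⟩ := pi_upper G X Y hXY hG (fun x y => 4 * h (x, y) + c (x, y))
    (fun v => if v ∈ X then Φ (f₀ v) (f₁ v) else Finset.range (4 * r))
    (by
      intro x hx y hy y' hy' a a' heq
      have m1 := (mem_piF G X Y x y).2 ⟨hx, hy, a⟩
      have m2 := (mem_piF G X Y x y').2 ⟨hx, hy', a'⟩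
      have q1 := c4 _ m1
      have q2 := c4 _ m2
      exact (Prod.mk.inj (hinj _ m1 _ m2 (by omega) (by omega) (Or.inl rfl))).2)
    (by
      intro y hy x hx x' hx' a a' heq
      have m1 := (mem_piF G X Y x y).2 ⟨hx, hy, a⟩
      have m2 := (mem_piF G X Y x' y).2 ⟨hx', hy, a'⟩
      have q1 := c4 _ m1
      have q2 := c4 _ m2
      exact (Prod.mk.inj (hinj _ m1 _ m2 (by omega) (by omega) (Or.inr rfl))).1)
    (by
      intro x hx y hy a
      have m1 := (mem_piF G X Y x y).2 ⟨hx, hy, a⟩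
      have q1 := c4 _ m1
      have q2 := hh _ m1
      simp only [if_pos hx, if_neg (hYX y hy)]
      refine ⟨hΦ _ m1, ?_⟩
      rw [Finset.mem_range]; omega)
    (by
      intro v
      split_ifs with hv
      · exact hΦc v hv
      · rw [hY v ((hcov v).resolve_left hv)]; simp)
    (insert (Finset.range (4 * r))
      ((Finset.range r ×ˢ Finset.range r).image (fun p => Φ p.1 p.2)))
    (by
      intro v
      split_ifs with hv
      · apply Finset.mem_insert_of_mem
        rw [Finset.mem_image]
        exact ⟨(f₀ v, f₁ v), by simp [hf₀ v hv, hf₁ v hv], rfl⟩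
      · exact Finset.mem_insert_self _ _)
  exact ⟨c', h1, h2.trans (pi_P_card r Φ)⟩

lemma pi_up1 {V : Type*} [Fintype V] (G : SimpleGraph V) [DecidableRel G.Adj]
    (X Y : Finset V) (hXY : Disjoint X Y) (hcov : ∀ v : V, v ∈ X ∨ v ∈ Y)
    (hG : ∀ v w, G.Adj v w → (v ∈ X ∧ w ∈ Y) ∨ (v ∈ Y ∧ w ∈ X)) (r : ℕ)
    (hX : ∀ v ∈ X, G.degree v = 4) (hY : ∀ v ∈ Y, G.degree v = 4 * r) :
    ∃ c, IsProperEdgeColoring G c ∧ (Set.range (palette G c)).ncard ≤ r ^ 2 + 1 := by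
  classical
  obtain ⟨c, c4, cX, cY⟩ := piF_equi G X Y hXY 1 r hG hX hY
  have hF : ∀ e ∈ piF G X Y, e.1 ∈ X ∧ e.2 ∈ Y := by
    rintro ⟨x, y⟩ h
    have := (mem_piF G X Y x y).1 h
    exact ⟨this.1, this.2.1⟩
  obtain ⟨f₀, a1, a2⟩ := pi_case1 (piF G X Y) X Y r hF c 0 1
    (fun x hx => cX x hx 0 (by norm_num)) (fun x hx => cX x hx 1 (by norm_num))
    (fun x hx => cY x hx 0 (by norm_num)) (fun x hx => cY x hx 1 (by norm_num))
  obtain ⟨f₁, b1, b2⟩ := pi_case1 (piF G X Y) X Y r hF c 2 3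
    (fun x hx => cX x hx 2 (by norm_num)) (fun x hx => cX x hx 3 (by norm_num))
    (fun x hx => cY x hx 2 (by norm_num)) (fun x hx => cY x hx 3 (by norm_num))
  refine pi_final G X Y hXY hcov hG r hY c (fun e => if c e < 2 then f₀ e.1 else f₁ e.1) f₀ f₁
    piP c4 a1 b1 ?_ ?_ ?_ ?_
  · intro e he
    split_ifs
    · exact a1 _ (hF e he).1
    · exact b1 _ (hF e he).1
  · rintro ⟨x, y⟩ he ⟨x', y'⟩ he' hc hh hor
    have q := c4 _ he
    try dsimp only at hh hor
    rcases hor with h | h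
    · subst h
      have hx := (hF _ he).1
      obtain ⟨e0, h0⟩ := Finset.card_eq_one.1 (cX x hx _ q)
      have m1 : (x, y) ∈ ({e ∈ piF G X Y | e.1 = x ∧ c e = c (x, y)} : Finset (V × V)) := by
        simp [he]
      have m2 : (x, y') ∈ ({e ∈ piF G X Y | e.1 = x ∧ c e = c (x, y)} : Finset (V × V)) := by
        simp [he', hc]
      rw [h0, Finset.mem_singleton] at m1 m2
      rw [m1, m2]
    · subst h
      rw [← hc] at hh
      split_ifs at hh with h2
      · rw [a2 x x' y he he' hc (by omega) hh]
      · rw [b2 x x' y he he' hc (by omega) hh]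
  · intro e he
    have q := c4 _ he
    simp only [piP, Finset.mem_insert, Finset.mem_singleton]
    split_ifs <;> omega
  · intro x hx
    rw [hX x hx, piP_card]

lemma pi_up2 {V : Type*} [Fintype V] (G : SimpleGraph V) [DecidableRel G.Adj]
    (X Y : Finset V) (hXY : Disjoint X Y) (hcov : ∀ v : V, v ∈ X ∨ v ∈ Y)
    (hG : ∀ v w, G.Adj v w → (v ∈ X ∧ w ∈ Y) ∨ (v ∈ Y ∧ w ∈ X)) (r : ℕ) (hr : 2 ≤ r)
    (hX : ∀ v ∈ X, G.degree v = 4 * r - 4) (hY : ∀ v ∈ Y, G.degree v = 4 * r) :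
    ∃ c, IsProperEdgeColoring G c ∧ (Set.range (palette G c)).ncard ≤ r ^ 2 + 1 := by
  classical
  obtain ⟨c, c4, cX, cY⟩ := piF_equi G X Y hXY (r - 1) r hG
    (fun v hv => by rw [hX v hv]; omega) hY
  have hF : ∀ e ∈ piF G X Y, e.1 ∈ X ∧ e.2 ∈ Y := by
    rintro ⟨x, y⟩ h
    have := (mem_piF G X Y x y).1 h
    exact ⟨this.1, this.2.1⟩
  obtain ⟨h₀, f₀, a1, a2, a3⟩ := pi_case2 (piF G X Y) X Y r (by omega) hF c 0 1 (by norm_num)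
    (fun x hx => cX x hx 0 (by norm_num)) (fun x hx => cX x hx 1 (by norm_num))
    (fun x hx => cY x hx 0 (by norm_num)) (fun x hx => cY x hx 1 (by norm_num))
  obtain ⟨h₁, f₁, b1, b2, b3⟩ := pi_case2 (piF G X Y) X Y r (by omega) hF c 2 3 (by norm_num)
    (fun x hx => cX x hx 2 (by norm_num)) (fun x hx => cX x hx 3 (by norm_num))
    (fun x hx => cY x hx 2 (by norm_num)) (fun x hx => cY x hx 3 (by norm_num))
  have hh : ∀ e ∈ piF G X Y, (if c e < 2 then h₀ e else h₁ e) < r := by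
    intro e he
    have q := c4 _ he
    split_ifs
    · exact (a2 e he (by omega)).1
    · exact (b2 e he (by omega)).1
  refine pi_final G X Y hXY hcov hG r hY c (fun e => if c e < 2 then h₀ e else h₁ e) f₀ f₁
    (fun i j => Finset.range (4 * r) \ piP i j) c4 a1 b1 hh ?_ ?_ ?_
  · intro e he e' he' hc hh hor
    have q := c4 _ he
    try dsimp only at hh
    rw [← hc] at hh
    split_ifs at hh with h2
    · exact a3 e he e' he' hc (by omega) hh hor
    · exact b3 e he e' he' hc (by omega) hh hor
  · intro e he
    have q := c4 _ he
    have q2 := hh e he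
    simp only [piP, Finset.mem_sdiff, Finset.mem_range, Finset.mem_insert, Finset.mem_singleton]
    refine ⟨by omega, ?_⟩
    split_ifs with h2
    · have := (a2 e he (by omega)).2
      omega
    · have := (b2 e he (by omega)).2
      omega
  · intro x hx
    rw [hX x hx, Finset.card_sdiff_of_subset (piP_sub _ _ r (a1 x hx) (b1 x hx)), piP_card]
    simp

lemma pi_index_le {V : Type*} (G : SimpleGraph V) (N : ℕ)
    (h : ∃ c, IsProperEdgeColoring G c ∧ (Set.range (palette G c)).ncard ≤ N) :
    paletteIndex G ≤ N := by
  obtain ⟨c, h1, h2⟩ := h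
  exact le_trans (Nat.sInf_le (show _ ∈ {k | ∃ c : Sym2 V → ℕ, IsProperEdgeColoring G c ∧
    (Set.range (palette G c)).ncard = k} from ⟨c, h1, rfl⟩)) h2

/-- (i) If `G` is `(4,4r)`-biregular (`r ≥ 2`), then `r + 1 ≤ š(G) ≤ r² + 1`;
(ii) if `G` is `(4r−4,4r)`-biregular (`r ≥ 2`), then `š(G) ≤ r² + 1`. -/
theorem palette_index_four_biregular {V : Type*} [Fintype V]
    (G : SimpleGraph V) [DecidableRel G.Adj] (r : ℕ) (hr : 2 ≤ r) :
    (IsBiregular G 4 (4 * r) →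
      r + 1 ≤ paletteIndex G ∧ paletteIndex G ≤ r ^ 2 + 1) ∧
    (IsBiregular G (4 * r - 4) (4 * r) → paletteIndex G ≤ r ^ 2 + 1) := by
  constructor
  · rintro ⟨X, Y, _, hYn, hXY, hcov, hG, hX, hY⟩
    have hup := pi_up1 G X Y hXY hcov hG r hX hY
    refine ⟨?_, pi_index_le G _ hup⟩
    obtain ⟨c, h1, _⟩ := hup
    obtain ⟨c', h1', h2'⟩ := Nat.sInf_mem
      (s := {k | ∃ c : Sym2 V → ℕ, IsProperEdgeColoring G c ∧
        (Set.range (palette G c)).ncard = k}) ⟨_, c, h1, rfl⟩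
    unfold paletteIndex
    rw [← h2']
    exact pi_lower G r hr X Y hYn hXY hG hX hY c' h1'
  · rintro ⟨X, Y, _, hYn, hXY, hcov, hG, hX, hY⟩
    exact pi_index_le G _ (pi_up2 G X Y hXY hcov hG r hr hX hY)
end

section
/- For every integer r ≥ 2, if G is a (5,5r)-biregular bipartite graph, then r + 1 ≤ š(G) ≤ r³ + 1. -/
open SimpleGraph Finset

theorem hallFactor {E A B : Type*} [Fintype A] [Fintype B]
    [DecidableEq E] [DecidableEq A] [DecidableEq B] (f : E → A) (g : E → B) (k : ℕ) (S : Finset E)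
    (hf : ∀ a, #{e ∈ S | f e = a} = k + 1) (hg : ∀ b, #{e ∈ S | g e = b} = k + 1) :
    ∃ M ⊆ S, (∀ a, #{e ∈ M | f e = a} = 1) ∧ (∀ b, #{e ∈ M | g e = b} = 1) := by
  have hall : ∀ s : Finset A, #s ≤ #(s.biUnion fun a => ({e ∈ S | f e = a}).image g) := by
    intro s
    set N := s.biUnion fun a => ({e ∈ S | f e = a}).image g with hN
    have h1 : #{e ∈ S | f e ∈ s} = #s * (k + 1) := by
      rw [Finset.card_eq_sum_card_fiberwise (f := f) (t := s) (by intro e he; simpa using (Finset.mem_filter.1 he).2)]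
      rw [Finset.sum_const_nat]
      intro a ha
      rw [← hf a, Finset.filter_filter]
      congr 1
      ext e; simp only [Finset.mem_filter]
      constructor
      · rintro ⟨h1, h2, h3⟩; exact ⟨h1, h3⟩
      · rintro ⟨h1, h3⟩; exact ⟨h1, h3 ▸ ha, h3⟩
    have h2 : #{e ∈ S | g e ∈ N} = #N * (k + 1) := by
      rw [Finset.card_eq_sum_card_fiberwise (f := g) (t := N) (by intro e he; simpa using (Finset.mem_filter.1 he).2)]
      rw [Finset.sum_const_nat]
      intro a ha
      rw [← hg a, Finset.filter_filter]
      congr 1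
      ext e; simp only [Finset.mem_filter]
      constructor
      · rintro ⟨h1, h2, h3⟩; exact ⟨h1, h3⟩
      · rintro ⟨h1, h3⟩; exact ⟨h1, h3 ▸ ha, h3⟩
    have h3 : #{e ∈ S | f e ∈ s} ≤ #{e ∈ S | g e ∈ N} := by
      apply Finset.card_le_card
      intro e he
      rw [Finset.mem_filter] at he ⊢
      refine ⟨he.1, ?_⟩
      rw [hN, Finset.mem_biUnion]
      exact ⟨f e, he.2, Finset.mem_image.2 ⟨e, Finset.mem_filter.2 ⟨he.1, rfl⟩, rfl⟩⟩
    rw [h1, h2] at h3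
    exact Nat.le_of_mul_le_mul_right h3 (Nat.succ_pos k)
  obtain ⟨m, hm, hmt⟩ := (Finset.all_card_le_biUnion_card_iff_exists_injective _).1 hall
  have hcard : Fintype.card A = Fintype.card B := by
    have h1 : #S = Fintype.card A * (k + 1) := by
      rw [Finset.card_eq_sum_card_fiberwise (f := f) (t := univ) (by intro e he; simp)]
      rw [Finset.sum_const_nat (fun a _ => hf a), Finset.card_univ]
    have h2 : #S = Fintype.card B * (k + 1) := by
      rw [Finset.card_eq_sum_card_fiberwise (f := g) (t := univ) (by intro e he; simp)]
      rw [Finset.sum_const_nat (fun a _ => hg a), Finset.card_univ]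
    exact Nat.eq_of_mul_eq_mul_right (Nat.succ_pos k) (h1.symm.trans h2)
  have hbij : Function.Bijective m := (Fintype.bijective_iff_injective_and_card m).2 ⟨hm, hcard⟩
  have hex : ∀ a, ∃ e ∈ S, f e = a ∧ g e = m a := by
    intro a
    have := hmt a
    simp only [Finset.mem_image, Finset.mem_filter] at this
    obtain ⟨e, ⟨h1, h2⟩, h3⟩ := this
    exact ⟨e, h1, h2, h3⟩
  choose t htS htf htg using hex
  refine ⟨univ.image t, ?_, ?_, ?_⟩
  · intro e he
    obtain ⟨a, -, rfl⟩ := Finset.mem_image.1 he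
    exact htS a
  · intro a
    rw [Finset.card_eq_one]
    refine ⟨t a, ?_⟩
    ext e
    simp only [Finset.mem_filter, Finset.mem_image, Finset.mem_univ, true_and, Finset.mem_singleton]
    constructor
    · rintro ⟨⟨a', rfl⟩, h⟩
      rw [htf] at h; rw [h]
    · rintro rfl
      exact ⟨⟨a, rfl⟩, htf a⟩
  · intro b
    obtain ⟨a, rfl⟩ := hbij.2 b
    rw [Finset.card_eq_one]
    refine ⟨t a, ?_⟩
    ext e
    simp only [Finset.mem_filter, Finset.mem_image, Finset.mem_univ, true_and, Finset.mem_singleton]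
    constructor
    · rintro ⟨⟨a', rfl⟩, h⟩
      rw [htg] at h; rw [hm h]
    · rintro rfl
      exact ⟨⟨a, rfl⟩, htg a⟩

theorem konigAux {E A B : Type*} [Fintype A] [Fintype B]
    [DecidableEq E] [DecidableEq A] [DecidableEq B] (f : E → A) (g : E → B) (k : ℕ) :
    ∀ S : Finset E, (∀ a, #{e ∈ S | f e = a} = k) → (∀ b, #{e ∈ S | g e = b} = k) →
    ∃ c : E → ℕ, (∀ e ∈ S, c e < k) ∧
      (∀ e ∈ S, ∀ e' ∈ S, c e = c e' → f e = f e' → e = e') ∧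
      (∀ e ∈ S, ∀ e' ∈ S, c e = c e' → g e = g e' → e = e') := by
  induction k with
  | zero =>
    intro S hf hg
    have : ∀ e, e ∉ S := by
      intro e he
      have h := hf (f e)
      rw [Finset.card_eq_zero] at h
      have : e ∈ ({e' ∈ S | f e' = f e}) := Finset.mem_filter.2 ⟨he, rfl⟩
      rw [h] at this
      simp at this
    exact ⟨fun _ => 0, fun e he => (this e he).elim, fun e he => (this e he).elim,
      fun e he => (this e he).elim⟩
  | succ k ih =>
    intro S hf hg
    obtain ⟨M, hMS, hMf, hMg⟩ := hallFactor f g k S hf hg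
    have key : ∀ (p : E → Prop) [DecidablePred p], #{e ∈ S | p e} = k + 1 → #{e ∈ M | p e} = 1 →
        #{e ∈ S \ M | p e} = k := by
      intro p _ h1 h2
      have h3 : ({e ∈ S \ M | p e}) = ({e ∈ S | p e}) \ ({e ∈ M | p e}) := by
        ext e; simp only [Finset.mem_filter, Finset.mem_sdiff]; tauto
      rw [h3, Finset.card_sdiff_of_subset (Finset.filter_subset_filter _ hMS), h1, h2]
      rfl
    obtain ⟨c, hc, hcf, hcg⟩ := ih (S \ M) (fun a => key _ (hf a) (hMf a))
      (fun b => key _ (hg b) (hMg b))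
    have uf : ∀ e ∈ M, ∀ e' ∈ M, f e = f e' → e = e' := by
      intro e he e' he' h
      exact Finset.card_le_one.1 (hMf (f e')).le e (by simp [he, h]) e' (by simp [he'])
    have ug : ∀ e ∈ M, ∀ e' ∈ M, g e = g e' → e = e' := by
      intro e he e' he' h
      exact Finset.card_le_one.1 (hMg (g e')).le e (by simp [he, h]) e' (by simp [he'])
    refine ⟨fun e => if e ∈ M then k else c e, ?_, ?_, ?_⟩
    · intro e he
      by_cases h : e ∈ M
      · simp [h]
      · have := hc e (by simp [h, he])
        simp [h]; omega
    · intro e he e' he' h1 h2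
      by_cases h : e ∈ M <;> by_cases h' : e' ∈ M <;> simp only [h, h', if_true, if_false] at h1
      · exact uf e h e' h' h2
      · have := hc e' (by simp [h', he']); omega
      · have := hc e (by simp [h, he]); omega
      · exact hcf e (by simp [h, he]) e' (by simp [h', he']) h1 h2
    · intro e he e' he' h1 h2
      by_cases h : e ∈ M <;> by_cases h' : e' ∈ M <;> simp only [h, h', if_true, if_false] at h1
      · exact ug e h e' h' h2
      · have := hc e' (by simp [h', he']); omega
      · have := hc e (by simp [h, he]); omega
      · exact hcg e (by simp [h, he]) e' (by simp [h', he']) h1 h2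

theorem konigFin {E A B : Type*} [Fintype E] [Fintype A] [Fintype B]
    [DecidableEq E] [DecidableEq A] [DecidableEq B] (f : E → A) (g : E → B) (k : ℕ)
    (hf : ∀ a, #{e | f e = a} = k) (hg : ∀ b, #{e | g e = b} = k) :
    ∃ c : E → Fin k, (∀ e e', c e = c e' → f e = f e' → e = e') ∧
      (∀ e e', c e = c e' → g e = g e' → e = e') := by
  obtain ⟨c, h1, h2, h3⟩ := konigAux f g k univ hf hg
  exact ⟨fun e => ⟨c e, h1 e (mem_univ _)⟩,
    fun e e' h => h2 e (mem_univ _) e' (mem_univ _) (by simpa using h),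
    fun e e' h => h3 e (mem_univ _) e' (mem_univ _) (by simpa using h)⟩

theorem surjFiber {E A : Type*} [Fintype E] [DecidableEq E] [DecidableEq A] {k : ℕ} (f : E → A)
    (hf : ∀ a, #{e | f e = a} = k) (c : E → Fin k)
    (hc : ∀ e e', c e = c e' → f e = f e' → e = e') (a : A) (i : Fin k) :
    ∃ e, f e = a ∧ c e = i := by
  have h1 : #(({e | f e = a} : Finset E).image c) = k := by
    rw [Finset.card_image_of_injOn, hf a]
    intro e he e' he' h
    simp only [Finset.coe_filter, Finset.mem_univ, true_and, Set.mem_ofPred_eq] at he he'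
    exact hc e e' h (he.trans he'.symm)
  have h2 : ({e | f e = a} : Finset E).image c = univ :=
    Finset.eq_univ_of_card _ (by simpa using h1)
  have : i ∈ ({e | f e = a} : Finset E).image c := by rw [h2]; simp
  simpa using this

theorem splitFiber {E A : Type*} [Fintype E] [DecidableEq E] [DecidableEq A] (k r : ℕ) (f : E → A)
    (hf : ∀ a, #{e | f e = a} = k * r) :
    ∃ h : E → Fin r, ∀ p : A × Fin r, #{e | (f e, h e) = p} = k := by
  have hq : ∀ a, Nonempty ({e // f e = a} ≃ Fin k × Fin r) := by
    intro a
    rw [← Fintype.card_eq, Fintype.card_subtype, hf a]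
    simp
  let q : ∀ a, {e // f e = a} ≃ Fin k × Fin r := fun a => (hq a).some
  refine ⟨fun e => (q (f e) ⟨e, rfl⟩).2, ?_⟩
  rintro ⟨a, j⟩
  have : #({e | (f e, (q (f e) ⟨e, rfl⟩).2) = (a, j)} : Finset E) = #(univ : Finset (Fin k)) := by
    symm
    apply Finset.card_bij (fun i _ => ((q a).symm (i, j)).1)
    · intro i _
      simp only [Finset.mem_filter, Finset.mem_univ, true_and, Prod.mk.injEq]
      rcases hx : (q a).symm (i, j) with ⟨e, he⟩
      subst he
      refine ⟨rfl, ?_⟩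
      have hz := (Equiv.symm_apply_eq _).1 hx
      exact (congrArg Prod.snd hz).symm
    · intro i _ i' _ h
      have := (q a).symm.injective (Subtype.ext h)
      simpa using this
    · intro e he
      simp only [Finset.mem_filter, Finset.mem_univ, true_and, Prod.mk.injEq] at he
      obtain ⟨rfl, h2⟩ := he
      refine ⟨(q (f e) ⟨e, rfl⟩).1, Finset.mem_univ _, ?_⟩
      rw [← h2]; simp
  simpa using this

/-- Abstract colouring. -/
theorem abstractColoring {E X Y : Type*} [Fintype E] [Fintype X] [Fintype Y] [DecidableEq E]
    [DecidableEq X] [DecidableEq Y] (r : ℕ) (f : E → X) (g : E → Y)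
    (hf : ∀ x, #{e | f e = x} = 5) (hg : ∀ y, #{e | g e = y} = 5 * r) :
    ∃ (c : E → Fin 5) (D : Fin 5 → X → Fin r), D 1 = D 0 ∧ D 3 = D 2 ∧
      (∀ x i, ∃ e, f e = x ∧ c e = i) ∧
      (∀ e e', c e = c e' → f e = f e' → e = e') ∧
      (∀ e e', c e = c e' → g e = g e' → D (c e) (f e) = D (c e) (f e') → e = e') := by
  obtain ⟨h, hh⟩ := splitFiber 5 r g hg
  obtain ⟨c, hc1, hc2⟩ := konigFin f (fun e => (g e, h e)) 5 hf hh
  have hs1 := surjFiber f hf c hc1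
  have hs2 := surjFiber (fun e => (g e, h e)) hh c hc2
  choose M hMf hMc using hs1
  have hN : ∀ i y, #{x | g (M x i) = y} = r := by
    intro i y
    have : #({x | g (M x i) = y} : Finset X) = #(univ : Finset (Fin r)) := by
      apply Finset.card_bij (fun x _ => h (M x i))
      · intro x _; simp
      · intro x hx x' hx' hxx
        simp only [Finset.mem_filter, Finset.mem_univ, true_and] at hx hx'
        have := hc2 (M x i) (M x' i) (by rw [hMc, hMc]) (by simp [hx, hx', hxx])
        rw [← hMf x i, this, hMf]
      · intro j _
        obtain ⟨e, he, hi⟩ := hs2 (y, j) i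
        simp only [Prod.mk.injEq] at he
        have : M (f e) i = e := hc1 _ _ (by rw [hMc, hi]) (by rw [hMf])
        exact ⟨f e, by simp [this, he.1], by rw [this]; exact he.2⟩
    simpa using this
  obtain ⟨d1, h10, h11⟩ := konigFin (fun x => g (M x 0)) (fun x => g (M x 1)) r (hN 0) (hN 1)
  obtain ⟨d2, h22, h23⟩ := konigFin (fun x => g (M x 2)) (fun x => g (M x 3)) r (hN 2) (hN 3)
  obtain ⟨d3, h34, -⟩ := konigFin (fun x => g (M x 4)) (fun x => g (M x 4)) r (hN 4) (hN 4)
  have hD : ∀ i x x', (![d1, d1, d2, d2, d3] : Fin 5 → X → Fin r) i x =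
      (![d1, d1, d2, d2, d3] : Fin 5 → X → Fin r) i x' → g (M x i) = g (M x' i) → x = x' := by
    intro i x x'
    fin_cases i
    · exact h10 x x'
    · exact h11 x x'
    · exact h22 x x'
    · exact h23 x x'
    · exact h34 x x'
  refine ⟨c, ![d1, d1, d2, d2, d3], rfl, rfl, fun x i => ⟨M x i, hMf x i, hMc x i⟩, hc1, ?_⟩
  intro e e' h1 h2 h3
  have a1 : M (f e) (c e) = e := hc1 _ _ (hMc _ _) (hMf _ _)
  have a2 : M (f e') (c e) = e' := hc1 _ _ ((hMc _ _).trans h1) (hMf _ _)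
  exact hc1 _ _ h1 (hD _ _ _ h3 (by rw [a1, a2, h2]))

theorem lowerBound {V : Type*} [Fintype V]
    (G : SimpleGraph V) [DecidableRel G.Adj] (r : ℕ) (hr : 2 ≤ r)
    (hG : IsBiregular G 5 (5 * r)) (c : Sym2 V → ℕ) (hc : IsProperEdgeColoring G c) :
    r + 1 ≤ (Set.range (palette G c)).ncard := by
  classical
  obtain ⟨X, Y, -, ⟨y, hy⟩, hXY, -, hadj, hX, hY⟩ := hG
  let pal : V → Finset ℕ := fun v => (G.incidenceFinset v).image c
  have hpal : ∀ v, (pal v : Set ℕ) = palette G c v := by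
    intro v
    ext n
    simp only [pal, palette, Finset.coe_image, Set.mem_image, Finset.mem_coe,
      SimpleGraph.mem_incidenceFinset, SimpleGraph.incidenceSet, Set.mem_ofPred_eq]
    constructor
    · rintro ⟨e, ⟨h1, h2⟩, h3⟩; exact ⟨e, h1, h2, h3⟩
    · rintro ⟨e, h1, h2, h3⟩; exact ⟨e, ⟨h1, h2⟩, h3⟩
  have hcard : ∀ v, #(pal v) = G.degree v := by
    intro v
    rw [Finset.card_image_of_injOn, SimpleGraph.card_incidenceFinset_eq_degree]
    intro e he e' he' h
    simp only [Finset.mem_coe, SimpleGraph.mem_incidenceFinset] at he he'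
    by_contra hne
    exact hc e he.1 e' he'.1 hne ⟨v, he.2, he'.2⟩ h
  have hrange : (Set.range (palette G c)).ncard = #(univ.image pal) := by
    have : Set.range (palette G c) = (fun s : Finset ℕ => (s : Set ℕ)) '' (univ.image pal : Finset (Finset ℕ)) := by
      ext s
      simp [← hpal]
    rw [this, Set.ncard_image_of_injective _ Finset.coe_injective, Set.ncard_coe_finset]
  rw [hrange]
  have hnot : pal y ∉ X.image pal := by
    intro h
    obtain ⟨x, hx, hxy⟩ := Finset.mem_image.1 h
    have h1 := hcard x
    rw [hxy, hcard y, hX x hx, hY y hy] at h1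
    omega
  have h1 : #(insert (pal y) (X.image pal)) ≤ #(univ.image pal) := by
    apply Finset.card_le_card
    intro s hs
    rcases Finset.mem_insert.1 hs with rfl | hs
    · exact Finset.mem_image_of_mem _ (mem_univ _)
    · exact Finset.image_subset_image (Finset.subset_univ _) hs
  rw [Finset.card_insert_of_notMem hnot] at h1
  have h2 : pal y ⊆ (X.image pal).biUnion id := by
    intro n hn
    obtain ⟨e, he, rfl⟩ := Finset.mem_image.1 hn
    rw [SimpleGraph.mem_incidenceFinset] at he
    obtain ⟨he1, he2⟩ := he
    obtain ⟨x, rfl⟩ := Sym2.mem_iff_exists.1 he2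
    have hxX : x ∈ X := by
      rcases hadj y x he1 with h | h
      · exact (Finset.disjoint_left.1 hXY h.1 hy).elim
      · exact h.2
    refine Finset.mem_biUnion.2 ⟨pal x, Finset.mem_image_of_mem _ hxX, ?_⟩
    refine Finset.mem_image_of_mem _ ?_
    rw [SimpleGraph.mem_incidenceFinset]
    exact ⟨he1, by simp⟩
  have h3 := (Finset.card_le_card h2).trans (Finset.card_biUnion_le_card_mul _ _ 5 (by
    intro s hs
    obtain ⟨x, hx, rfl⟩ := Finset.mem_image.1 hs
    exact ((hcard x).trans (hX x hx)).le))
  rw [hcard, hY y hy] at h3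
  omega

theorem upperBound {V : Type*} [Fintype V]
    (G : SimpleGraph V) [DecidableRel G.Adj] (r : ℕ) (hr : 2 ≤ r)
    (hG : IsBiregular G 5 (5 * r)) :
    ∃ c : Sym2 V → ℕ, IsProperEdgeColoring G c ∧ (Set.range (palette G c)).ncard ≤ r ^ 3 + 1 := by
  classical
  obtain ⟨X, Y, -, -, hXY, hcov, hadj, hX, hY⟩ := hG
  let E := {p : X × Y // G.Adj p.1 p.2}
  let f : E → X := fun e => e.1.1
  let g : E → Y := fun e => e.1.2
  have hf : ∀ x, #{e | f e = x} = 5 := by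
    intro x
    rw [← hX x x.2, ← SimpleGraph.card_neighborFinset_eq_degree]
    apply Finset.card_bij (fun e _ => (g e : V))
    · intro e he
      simp only [Finset.mem_filter, Finset.mem_univ, true_and] at he
      subst he
      rw [SimpleGraph.mem_neighborFinset]
      exact e.2
    · intro e he e' he' h
      simp only [Finset.mem_filter, Finset.mem_univ, true_and] at he he'
      exact Subtype.ext (Prod.ext (he.trans he'.symm) (Subtype.ext h))
    · intro y hy
      rw [SimpleGraph.mem_neighborFinset] at hy
      have hyY : y ∈ Y := by
        rcases hadj _ _ hy with h | h
        · exact h.2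
        · exact (Finset.disjoint_left.1 hXY x.2 h.1).elim
      exact ⟨⟨(x, ⟨y, hyY⟩), hy⟩, by simp [f], rfl⟩
  have hg : ∀ y, #{e | g e = y} = 5 * r := by
    intro y
    rw [← hY y y.2, ← SimpleGraph.card_neighborFinset_eq_degree]
    apply Finset.card_bij (fun e _ => (f e : V))
    · intro e he
      simp only [Finset.mem_filter, Finset.mem_univ, true_and] at he
      subst he
      rw [SimpleGraph.mem_neighborFinset]
      exact e.2.symm
    · intro e he e' he' h
      simp only [Finset.mem_filter, Finset.mem_univ, true_and] at he he'
      exact Subtype.ext (Prod.ext (Subtype.ext h) (he.trans he'.symm))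
    · intro x hx
      rw [SimpleGraph.mem_neighborFinset] at hx
      have hxX : x ∈ X := by
        rcases hadj _ _ hx with h | h
        · exact (Finset.disjoint_left.1 hXY h.1 y.2).elim
        · exact h.2
      exact ⟨⟨(⟨x, hxX⟩, y), hx.symm⟩, by simp [g], rfl⟩
  obtain ⟨c, D, hD1, hD3, hsurj, hinj1, hinj2⟩ := abstractColoring r f g hf hg
  let col : E → ℕ := fun e => (finProdFinEquiv (c e, D (c e) (f e))).1
  have hcol : ∀ e e', col e = col e' → c e = c e' ∧ D (c e) (f e) = D (c e) (f e') := by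
    intro e e' h
    have := finProdFinEquiv.injective (Fin.ext h)
    simp only [Prod.mk.injEq] at this
    exact ⟨this.1, by rw [this.2, this.1]⟩
  let T : E → Sym2 V := fun e => s((f e : V), (g e : V))
  have hTmem : ∀ e, T e ∈ G.edgeSet := fun e => e.2
  have hTsurj : ∀ s ∈ G.edgeSet, ∃ e, T e = s := by
    intro s
    induction s using Sym2.ind with
    | _ v w =>
      intro h
      rcases hadj v w h with h' | h'
      · exact ⟨⟨(⟨v, h'.1⟩, ⟨w, h'.2⟩), h⟩, rfl⟩
      · exact ⟨⟨(⟨w, h'.2⟩, ⟨v, h'.1⟩), SimpleGraph.Adj.symm h⟩, Sym2.eq_swap⟩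
  have hne : ∀ (x : X) (y : Y), (x : V) ≠ y := by
    intro x y h
    exact Finset.disjoint_left.1 hXY x.2 (h ▸ y.2)
  have hTx : ∀ (x : X) e, (x : V) ∈ T e ↔ f e = x := by
    intro x e
    simp only [T, Sym2.mem_iff, hne, or_false]
    exact ⟨fun h => (Subtype.ext h).symm, fun h => by rw [h]⟩
  have hTy : ∀ (y : Y) e, (y : V) ∈ T e ↔ g e = y := by
    intro y e
    simp only [T, Sym2.mem_iff, (hne _ _).symm, false_or]
    exact ⟨fun h => (Subtype.ext h).symm, fun h => by rw [h]⟩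
  have hTinj : Function.Injective T := by
    intro e e' h
    have h1 := (hTx (f e) e').1 (h ▸ (hTx (f e) e).2 rfl)
    have h2 := (hTy (g e) e').1 (h ▸ (hTy (g e) e).2 rfl)
    exact Subtype.ext (Prod.ext h1.symm h2.symm)
  let φ : Sym2 V → ℕ := Function.extend T col (fun _ => 0)
  have hφ : ∀ e, φ (T e) = col e := fun e => hTinj.extend_apply _ _ _
  have hpalx : ∀ x : X, palette G φ x = {n | ∃ e, f e = x ∧ col e = n} := by
    intro x
    ext n
    constructor
    · rintro ⟨s, hs, hv, hn⟩
      obtain ⟨e, rfl⟩ := hTsurj s hs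
      exact ⟨e, (hTx x e).1 hv, (hφ e).symm.trans hn⟩
    · rintro ⟨e, h1, h2⟩
      exact ⟨T e, hTmem e, (hTx x e).2 h1, (hφ e).trans h2⟩
  have hpaly : ∀ y : Y, palette G φ y = {n | ∃ e, g e = y ∧ col e = n} := by
    intro y
    ext n
    constructor
    · rintro ⟨s, hs, hv, hn⟩
      obtain ⟨e, rfl⟩ := hTsurj s hs
      exact ⟨e, (hTy y e).1 hv, (hφ e).symm.trans hn⟩
    · rintro ⟨e, h1, h2⟩
      exact ⟨T e, hTmem e, (hTy y e).2 h1, (hφ e).trans h2⟩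
  have hpy : ∀ y : Y, palette G φ y = {n | n < 5 * r} := by
    intro y
    rw [hpaly]
    ext n
    constructor
    · rintro ⟨e, -, rfl⟩
      exact (finProdFinEquiv (c e, D (c e) (f e))).2
    · intro hn
      obtain ⟨e, h1, h2⟩ := surjFiber g hg (fun e => finProdFinEquiv (c e, D (c e) (f e)))
        (fun e e' h h' => by
          obtain ⟨a, b⟩ := hcol e e' (congrArg Fin.val h)
          exact hinj2 e e' a h' b) y ⟨n, hn⟩
      exact ⟨e, h1, congrArg Fin.val h2⟩
  let R : Fin r × Fin r × Fin r → Set ℕ := fun p =>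
    {n | ∃ i : Fin 5, (finProdFinEquiv (i, (![p.1, p.1, p.2.1, p.2.1, p.2.2] : Fin 5 → Fin r) i)).1 = n}
  have hpx : ∀ x : X, palette G φ x = R (D 0 x, D 2 x, D 4 x) := by
    intro x
    have hv : ∀ i, (![D 0 x, D 0 x, D 2 x, D 2 x, D 4 x] : Fin 5 → Fin r) i = D i x := by
      intro i
      fin_cases i
      · rfl
      · exact congrFun hD1.symm x
      · rfl
      · exact congrFun hD3.symm x
      · rfl
    rw [hpalx]
    ext n
    simp only [R, Set.mem_ofPred_eq, hv]
    constructor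
    · rintro ⟨e, rfl, rfl⟩
      exact ⟨c e, rfl⟩
    · rintro ⟨i, rfl⟩
      obtain ⟨e, rfl, rfl⟩ := hsurj x i
      exact ⟨e, rfl, rfl⟩
  refine ⟨φ, ?_, ?_⟩
  · intro s hs s' hs' hss ⟨v, hv, hv'⟩ h
    obtain ⟨e, rfl⟩ := hTsurj s hs
    obtain ⟨e', rfl⟩ := hTsurj s' hs'
    rw [hφ, hφ] at h
    obtain ⟨a, b⟩ := hcol e e' h
    apply hss
    congr 1
    rcases hcov v with hvX | hvY
    · exact hinj1 e e' a (((hTx ⟨v, hvX⟩ e).1 hv).trans ((hTx ⟨v, hvX⟩ e').1 hv').symm)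
    · exact hinj2 e e' a (((hTy ⟨v, hvY⟩ e).1 hv).trans ((hTy ⟨v, hvY⟩ e').1 hv').symm) b
  · have hsub : Set.range (palette G φ) ⊆ ((insert {n | n < 5 * r} (univ.image R) : Finset (Set ℕ)) : Set (Set ℕ)) := by
      rintro _ ⟨v, rfl⟩
      rw [Finset.mem_coe, Finset.mem_insert]
      rcases hcov v with hvX | hvY
      · right
        have := hpx ⟨v, hvX⟩
        simp only at this
        rw [this]
        exact Finset.mem_image_of_mem _ (mem_univ _)
      · left
        exact hpy ⟨v, hvY⟩
    refine (Set.ncard_le_ncard hsub (Finset.finite_toSet _)).trans ?_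
    rw [Set.ncard_coe_finset]
    refine (Finset.card_insert_le _ _).trans ?_
    have : #(univ.image R) ≤ r ^ 3 := by
      refine Finset.card_image_le.trans ?_
      simp only [Finset.card_univ, Fintype.card_prod, Fintype.card_fin]
      apply le_of_eq; ring
    omega

/-- If `G` is `(5,5r)`-biregular (`r ≥ 2`), then `r + 1 ≤ š(G) ≤ r³ + 1`. -/
theorem palette_index_five_biregular {V : Type*} [Fintype V]
    (G : SimpleGraph V) [DecidableRel G.Adj] (r : ℕ) (hr : 2 ≤ r)
    (hG : IsBiregular G 5 (5 * r)) :
    r + 1 ≤ paletteIndex G ∧ paletteIndex G ≤ r ^ 3 + 1 := by 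
  have hup := upperBound G r hr hG
  obtain ⟨c, hc, hle⟩ := hup
  constructor
  · have hne : {k | ∃ c : Sym2 V → ℕ, IsProperEdgeColoring G c ∧
        (Set.range (palette G c)).ncard = k}.Nonempty := ⟨_, c, hc, rfl⟩
    obtain ⟨c', hc', h⟩ := Nat.sInf_mem hne
    have := lowerBound G r hr hG c' hc'
    rw [h] at this
    exact this
  · have hmem : (Set.range (palette G c)).ncard ∈ {k | ∃ c : Sym2 V → ℕ, IsProperEdgeColoring G c ∧
        (Set.range (palette G c)).ncard = k} := ⟨c, hc, rfl⟩
    exact (Nat.sInf_le hmem).trans hle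
end

section
/- For every integer r ≥ 2, if G is an (r,2r)-biregular bipartite graph, then 3 ≤ š(G) ≤ 2^{⌈r/2⌉} + 1. -/
open SimpleGraph Finset

theorem aux_count {E A : Type*} [DecidableEq A] (S : Finset E) (a : E → A) (k : ℕ)
    (h : ∀ p, #{e ∈ S | a e = p} = k) (s : Finset A) :
    #{e ∈ S | a e ∈ s} = k * #s := by
  rw [Finset.card_eq_sum_card_fiberwise (f := a) (t := s)]
  · rw [Finset.sum_congr rfl (g := fun _ => k)]
    · simp [mul_comm]
    · intro p hp
      rw [← h p, Finset.filter_filter]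
      congr 1
      ext e
      simp only [Finset.mem_filter]
      constructor
      · rintro ⟨h1, _, h2⟩
        exact ⟨h1, h2⟩
      · rintro ⟨h1, h2⟩
        exact ⟨h1, h2 ▸ hp, h2⟩
  · intro e he
    simpa using (Finset.mem_filter.1 he).2

theorem aux_match {E A B : Type*} [DecidableEq E] [DecidableEq A] [DecidableEq B]
    [Fintype A] [Fintype B] (S : Finset E) (a : E → A) (b : E → B) (k : ℕ) (hk : 0 < k)
    (ha : ∀ p, #{e ∈ S | a e = p} = k) (hb : ∀ p, #{e ∈ S | b e = p} = k) :
    ∃ M ⊆ S, (∀ p, #{e ∈ M | a e = p} = 1) ∧ (∀ p, #{e ∈ M | b e = p} = 1) := by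
  have hall := (Finset.all_card_le_biUnion_card_iff_exists_injective
    (fun p : A => Finset.image b {e ∈ S | a e = p})).1 (by
      intro s
      have h1 := aux_count S a k ha s
      have h2 := aux_count S b k hb (s.biUnion (fun p : A => Finset.image b {e ∈ S | a e = p}))
      have h3 : #{e ∈ S | a e ∈ s} ≤
          #{e ∈ S | b e ∈ (s.biUnion (fun p : A => Finset.image b {e ∈ S | a e = p}))} := by
        apply Finset.card_le_card
        intro e he
        simp only [Finset.mem_filter, Finset.mem_biUnion, Finset.mem_image] at he ⊢
        exact ⟨he.1, a e, he.2, e, ⟨he.1, rfl⟩, rfl⟩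
      rw [h1, h2] at h3
      exact Nat.le_of_mul_le_mul_left h3 hk)
  obtain ⟨f, hf, hft⟩ := hall
  have hcard : Fintype.card A = Fintype.card B := by
    have h1 := aux_count S a k ha Finset.univ
    have h2 := aux_count S b k hb Finset.univ
    simp only [Finset.mem_univ, Finset.filter_true] at h1 h2
    rw [h1] at h2
    exact Nat.eq_of_mul_eq_mul_left hk h2
  have hbij : Function.Bijective f := (Fintype.bijective_iff_injective_and_card f).2 ⟨hf, hcard⟩
  have : ∀ p, ∃ e, e ∈ S ∧ a e = p ∧ b e = f p := by
    intro p
    have := hft p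
    simp only [Finset.mem_filter, Finset.mem_image] at this
    obtain ⟨e, ⟨h1, h2⟩, h3⟩ := this
    exact ⟨e, h1, h2, h3⟩
  choose m hmS hma hmb using this
  refine ⟨Finset.univ.image m, ?_, ?_, ?_⟩
  · intro e he
    simp only [Finset.mem_image, Finset.mem_univ, true_and] at he
    obtain ⟨p, rfl⟩ := he
    exact hmS p
  · intro p
    rw [Finset.card_eq_one]
    refine ⟨m p, ?_⟩
    ext e
    simp only [Finset.mem_filter, Finset.mem_image, Finset.mem_univ, true_and,
      Finset.mem_singleton]
    constructor
    · rintro ⟨⟨q, rfl⟩, h⟩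
      rw [hma] at h
      rw [h]
    · rintro rfl
      exact ⟨⟨p, rfl⟩, hma p⟩
  · intro q
    obtain ⟨p, rfl⟩ := hbij.2 q
    rw [Finset.card_eq_one]
    refine ⟨m p, ?_⟩
    ext e
    simp only [Finset.mem_filter, Finset.mem_image, Finset.mem_univ, true_and,
      Finset.mem_singleton]
    constructor
    · rintro ⟨⟨q, rfl⟩, h⟩
      rw [hmb] at h
      rw [hf h]
    · rintro rfl
      exact ⟨⟨p, rfl⟩, hmb p⟩

theorem aux_konig {E A B : Type*} [DecidableEq E] [DecidableEq A] [DecidableEq B]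
    [Fintype A] [Fintype B] (a : E → A) (b : E → B) (k : ℕ) : ∀ (S : Finset E)
    (_ : ∀ p, #{e ∈ S | a e = p} = k) (_ : ∀ p, #{e ∈ S | b e = p} = k),
    ∃ c : E → ℕ, (∀ e ∈ S, c e < k) ∧ ∀ i < k, (∀ p, #{e ∈ S | a e = p ∧ c e = i} = 1) ∧
      (∀ p, #{e ∈ S | b e = p ∧ c e = i} = 1) := by
  induction k with
  | zero =>
    intro S ha hb
    refine ⟨fun _ => 0, ?_, by simp⟩
    intro e he
    have := ha (a e)
    rw [Finset.card_eq_zero] at this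
    have h2 : e ∈ ({e' ∈ S | a e' = a e} : Finset E) := by simp [he]
    rw [this] at h2
    simp at h2
  | succ k ih =>
    intro S ha hb
    obtain ⟨M, hM, hMa, hMb⟩ := aux_match S a b (k+1) (Nat.succ_pos k) ha hb
    have key : ∀ {C : Type _} [DecidableEq C] (a : E → C), (∀ p, #{e ∈ S | a e = p} = k + 1) →
        (∀ p, #{e ∈ M | a e = p} = 1) → (∀ p, #{e ∈ S \ M | a e = p} = k) := by
      intro C _ a ha hMa p
      have h1 : ({e ∈ S \ M | a e = p} : Finset E) = {e ∈ S | a e = p} \ {e ∈ M | a e = p} := by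
        ext e
        simp only [Finset.mem_filter, Finset.mem_sdiff]
        tauto
      rw [h1, Finset.card_sdiff_of_subset (Finset.filter_subset_filter _ hM), ha, hMa]
      rfl
    have key' : ∀ {C : Type _} [DecidableEq C] (a : E → C), (∀ p, #{e ∈ S | a e = p} = k + 1) →
        (∀ p, #{e ∈ M | a e = p} = 1) → (∀ p, #{e ∈ S \ M | a e = p} = k) := by
      intro C _ a ha hMa p
      have h1 : ({e ∈ S \ M | a e = p} : Finset E) = {e ∈ S | a e = p} \ {e ∈ M | a e = p} := by
        ext e
        simp only [Finset.mem_filter, Finset.mem_sdiff]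
        tauto
      rw [h1, Finset.card_sdiff_of_subset (Finset.filter_subset_filter _ hM), ha, hMa]
      rfl
    obtain ⟨c, hc, hci⟩ := ih (S \ M) (key a ha hMa) (key' b hb hMb)
    refine ⟨fun e => if e ∈ M then k else c e, ?_, ?_⟩
    · intro e he
      by_cases h : e ∈ M
      · simp [h]
      · have := hc e (by simp [he, h])
        simp only [h, if_false]
        omega
    · intro i hi
      have h1 : ∀ (P : E → Prop) [DecidablePred P], i < k →
          ({e ∈ S | P e ∧ (if e ∈ M then k else c e) = i} : Finset E)
            = {e ∈ S \ M | P e ∧ c e = i} := by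
        intro P _ hik
        ext e
        simp only [Finset.mem_filter, Finset.mem_sdiff]
        by_cases h : e ∈ M
        · simp only [h, if_true]
          constructor
          · rintro ⟨_, _, h⟩
            omega
          · rintro ⟨⟨_, h⟩, _⟩
            exact absurd trivial h
        · simp [h]
      have h2 : ∀ (P : E → Prop) [DecidablePred P], 
          ({e ∈ S | P e ∧ (if e ∈ M then k else c e) = k} : Finset E)
            = {e ∈ M | P e} := by
        intro P _
        ext e
        simp only [Finset.mem_filter]
        by_cases h : e ∈ M
        · simp [h, hM h]
        · simp only [h, if_false, false_and, iff_false]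
          rintro ⟨h3, _, h4⟩
          have := hc e (by simp [h3, h])
          omega
      rcases Nat.lt_or_ge i k with hik | hik
      · refine ⟨fun p => ?_, fun p => ?_⟩
        · rw [h1 (fun e => a e = p) hik]
          exact (hci i hik).1 p
        · rw [h1 (fun e => b e = p) hik]
          exact (hci i hik).2 p
      · obtain rfl : i = k := by omega
        refine ⟨fun p => ?_, fun p => ?_⟩
        · rw [h2 (fun e => a e = p)]
          exact hMa p
        · rw [h2 (fun e => b e = p)]
          exact hMb p

theorem aux_half {E : Type*} [DecidableEq E] (T : Finset E) (r : ℕ) (h : #T = 2 * r) :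
    ∃ U ⊆ T, #U = r := Finset.exists_subset_card_eq (by omega)

/-- decomposition into functions that are two-to-one -/
theorem aux_decomp {X Y : Type*} [Fintype X] [Fintype Y] [DecidableEq X] [DecidableEq Y]
    (R : X → Y → Prop) [∀ x, DecidablePred (R x)] (r : ℕ)
    (hX : ∀ x, #{y | R x y} = r) (hY : ∀ y, #{x | R x y} = 2 * r) :
    ∃ c : X → Y → ℕ, (∀ x y, R x y → c x y < r) ∧
      (∀ i < r, ∀ x, ∃ y, R x y ∧ c x y = i ∧ ∀ y', R x y' → c x y' = i → y' = y) ∧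
      (∀ i < r, ∀ y, #{x | R x y ∧ c x y = i} = 2) := by
  classical
  have := fun y => aux_half _ r (hY y)
  choose U hU hUc using this
  let S : Finset (X × Y) := {e | R e.1 e.2}
  let b : X × Y → Y × Bool := fun e => (e.2, decide (e.1 ∈ U e.2))
  obtain ⟨c, hc, hci⟩ := aux_konig (Prod.fst) b r S (by
    intro p
    rw [← hX p]
    symm
    apply Finset.card_bij (fun y _ => (p, y))
    · intro y hy
      simpa [S] using hy
    · intro y _ y' _ h
      simpa using h
    · rintro ⟨x, y⟩ h
      simp only [S, Finset.mem_filter, Finset.mem_univ, true_and] at h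
      obtain ⟨h, rfl⟩ := h
      exact ⟨y, by simpa using h, rfl⟩) (by
    rintro ⟨y, t⟩
    have : (if t then U y else ({x | R x y} : Finset X) \ U y).card = r := by
      cases t
      · simp only [Bool.false_eq_true, if_false]
        rw [Finset.card_sdiff_of_subset (hU y), hY, hUc]
        omega
      · simp [hUc]
    rw [← this]
    symm
    apply Finset.card_bij (fun x _ => (x, y))
    · intro x hx
      cases t
      · simpa [S, b] using hx
      · simp only [if_true] at hx
        simpa [S, b, hx] using hU y hx
    · intro y _ y' _ h
      simpa using h
    · rintro ⟨x, y'⟩ h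
      simp only [S, b, Finset.mem_filter, Finset.mem_univ, true_and, Prod.mk.injEq] at h
      obtain ⟨h, rfl, h2⟩ := h
      refine ⟨x, ?_, rfl⟩
      cases t
      · simpa [h] using h2
      · simpa using h2)
  refine ⟨fun x y => c (x, y), fun x y h => hc _ (by simpa [S] using h), ?_, ?_⟩
  · intro i hi x
    have := (hci i hi).1 x
    rw [Finset.card_eq_one] at this
    obtain ⟨⟨x', y⟩, h⟩ := this
    have h1 : (x', y) ∈ ({e ∈ S | e.1 = x ∧ c e = i} : Finset (X × Y)) := by rw [h]; simp
    simp only [S, Finset.mem_filter, Finset.mem_univ, true_and] at h1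
    obtain ⟨h1, rfl, h2⟩ := h1
    refine ⟨y, h1, h2, ?_⟩
    intro y' h3 h4
    have h5 : (x', y') ∈ ({e ∈ S | e.1 = x' ∧ c e = i} : Finset (X × Y)) := by simp [S, h3, h4]
    rw [h] at h5
    simpa using h5
  · intro i hi y
    have h := aux_count ({e ∈ S | c e = i}) b 1 (by
      intro p
      rw [← (hci i hi).2 p, Finset.filter_filter]
      congr 1
      ext e
      simp only [Finset.mem_filter]
      tauto) {(y, true), (y, false)}
    have h2 : #({(y, true), (y, false)} : Finset (Y × Bool)) = 2 := by
      rw [Finset.card_pair]; simp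
    rw [h2] at h
    rw [show 2 = 1 * 2 from rfl, ← h]
    apply Finset.card_bij (fun x _ => (x, y))
    · intro x hx
      simp only [Finset.mem_filter, Finset.mem_univ, true_and] at hx
      simp [S, b, hx]
      tauto
    · intro y _ y' _ h
      simpa using h
    · rintro ⟨x, y'⟩ h
      simp only [S, b, Finset.mem_filter, Finset.mem_univ, true_and, Finset.mem_insert,
        Prod.mk.injEq, Finset.mem_singleton] at h
      have : y' = y := by tauto
      subst this
      exact ⟨x, by simpa using h.1, rfl⟩

/-- pairing -/
theorem aux_pair {X Y : Type*} [Fintype X] [Fintype Y] [DecidableEq X] [DecidableEq Y]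
    (f g : X → Y) (hf : ∀ y, #{x | f x = y} = 2) (hg : ∀ y, #{x | g x = y} = 2) :
    ∃ s : X → ℕ, (∀ x, s x < 2) ∧ (∀ x x', f x = f x' → s x = s x' → x = x') ∧
      (∀ x x', g x = g x' → s x = s x' → x = x') := by
  obtain ⟨s, hs, hsi⟩ := aux_konig f g 2 Finset.univ hf hg
  refine ⟨s, fun x => hs x (Finset.mem_univ _), ?_, ?_⟩
  · intro x x' h1 h2
    have := (hsi (s x) (hs x (Finset.mem_univ _))).1 (f x)
    exact Finset.card_le_one.1 this.le _ (by simp) _ (by simp [h1, h2])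
  · intro x x' h1 h2
    have := (hsi (s x) (hs x (Finset.mem_univ _))).2 (g x)
    exact Finset.card_le_one.1 this.le _ (by simp) _ (by simp [h1, h2])

/-- main coloring of the bipartite relation -/
theorem aux_color {X Y : Type*} [Fintype X] [Fintype Y] [DecidableEq X] [DecidableEq Y]
    (R : X → Y → Prop) [∀ x, DecidablePred (R x)] (r : ℕ)
    (hX : ∀ x, #{y | R x y} = r) (hY : ∀ y, #{x | R x y} = 2 * r) :
    ∃ (d : X → Y → ℕ) (s : X → Fin ((r + 1) / 2) → Bool) (F : (Fin ((r + 1) / 2) → Bool) → Set ℕ),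
      (∀ x y, R x y → d x y < 2 * r) ∧
      (∀ x y y', R x y → R x y' → d x y = d x y' → y = y') ∧
      (∀ x x' y, R x y → R x' y → d x y = d x' y → x = x') ∧
      (∀ x, {n | ∃ y, R x y ∧ d x y = n} = F (s x)) := by
  obtain ⟨c, hc, hcx, hcy⟩ := aux_decomp R r hX hY
  have : ∀ i : Fin r, ∀ x, ∃ y, R x y ∧ c x y = i ∧ ∀ y', R x y' → c x y' = i → y' = y :=
    fun i x => hcx i i.2 x
  choose f hfR hfc hfu using this
  have hf2 : ∀ i y, #{x | f i x = y} = 2 := by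
    intro i y
    rw [← hcy i i.2 y]
    congr 1
    ext x
    simp only [Finset.mem_filter, Finset.mem_univ, true_and]
    constructor
    · rintro rfl
      exact ⟨hfR i x, hfc i x⟩
    · rintro ⟨h1, h2⟩
      exact (hfu i x y h1 h2).symm
  have hs := fun j : Fin ((r + 1) / 2) =>
    aux_pair (f ⟨2 * j, by omega⟩) (f ⟨min (2 * j + 1) (r - 1), by omega⟩) (hf2 _) (hf2 _)
  choose s hs2 hsf hsg using hs
  let σ : ℕ → X → ℕ := fun i x => if h : i / 2 < (r + 1) / 2 then s ⟨i / 2, h⟩ x else 0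
  have hσ2 : ∀ i x, σ i x < 2 := by
    intro i x
    simp only [σ]
    split_ifs
    · exact hs2 _ _
    · omega
  have hσ : ∀ i : Fin r, ∀ x x', f i x = f i x' → σ i x = σ i x' → x = x' := by
    intro i x x' h1 h2
    have hi := i.2
    have hi2 : (i : ℕ) / 2 < (r + 1) / 2 := by omega
    simp only [σ, hi2, dif_pos] at h2
    rcases Nat.mod_two_eq_zero_or_one i with h | h
    · refine hsf ⟨i / 2, hi2⟩ x x' ?_ h2
      have : (⟨2 * (i / 2 : ℕ), by omega⟩ : Fin r) = i := by
        ext; simp; omega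
      simpa only [this] using h1
    · refine hsg ⟨i / 2, hi2⟩ x x' ?_ h2
      have : (⟨min (2 * (i / 2 : ℕ) + 1) (r - 1), by omega⟩ : Fin r) = i := by
        ext; simp; omega
      simpa only [this] using h1
  refine ⟨fun x y => 2 * c x y + σ (c x y) x, fun x j => decide (s j x = 1),
    fun t => {n | ∃ i, ∃ h : i < r, n = 2 * i + if t ⟨i / 2, by omega⟩ then 1 else 0}, ?_, ?_, ?_, ?_⟩
  · intro x y h
    have := hc x y h
    have := hσ2 (c x y) x
    simp only
    omega
  · intro x y y' h h' he
    simp only at he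
    have h1 := hσ2 (c x y) x
    have h2 := hσ2 (c x y') x
    have h3 : c x y = c x y' := by omega
    have h4 := hfu ⟨c x y, hc x y h⟩ x y h rfl
    have h5 := hfu ⟨c x y, hc x y h⟩ x y' h' h3.symm
    rw [h4, h5]
  · intro x x' y h h' he
    simp only at he
    have h1 := hσ2 (c x y) x
    have h2 := hσ2 (c x' y) x'
    have h3 : c x y = c x' y := by omega
    have h4 := hfu ⟨c x y, hc x y h⟩ x y h rfl
    have h5 := hfu ⟨c x y, hc x y h⟩ x' y h' h3.symm
    apply hσ ⟨c x y, hc x y h⟩ x x' (h4.symm.trans h5)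
    simp only
    rw [← h3] at he
    omega
  · intro x
    have hval : ∀ i, ∀ h : i < r, σ i x =
        if decide (s ⟨i / 2, by omega⟩ x = 1) then 1 else 0 := by
      intro i h
      have hi2 : i / 2 < (r + 1) / 2 := by omega
      simp only [σ, hi2, dif_pos]
      have := hs2 ⟨i / 2, hi2⟩ x
      by_cases h : s ⟨i / 2, hi2⟩ x = 1
      · simp [h]
      · simp [h]; omega
    ext n
    simp only [Set.mem_setOf_eq]
    constructor
    · rintro ⟨y, h, rfl⟩
      exact ⟨c x y, hc x y h, by rw [hval _ (hc x y h)]⟩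
    · rintro ⟨i, h, rfl⟩
      refine ⟨f ⟨i, h⟩ x, hfR _ _, ?_⟩
      rw [hfc, hval _ h]

theorem aux_palette {V : Type*} (G : SimpleGraph V) (c : Sym2 V → ℕ) (v : V) :
    palette G c v = {n | ∃ w, G.Adj v w ∧ c s(v, w) = n} := by
  ext n
  simp only [palette, Set.mem_setOf_eq]
  constructor
  · rintro ⟨e, he, hv, rfl⟩
    obtain ⟨w, rfl⟩ := Sym2.mem_iff_exists.1 hv
    exact ⟨w, he, rfl⟩
  · rintro ⟨w, h, rfl⟩
    exact ⟨s(v, w), h, by simp, rfl⟩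

theorem aux_palette_card {V : Type*} [Fintype V] (G : SimpleGraph V) [DecidableRel G.Adj]
    (c : Sym2 V → ℕ) (hc : IsProperEdgeColoring G c) (v : V) :
    (palette G c v).ncard = G.degree v := by
  have : palette G c v = (fun w => c s(v, w)) '' (G.neighborFinset v : Set V) := by
    rw [aux_palette]
    ext n
    simp
  rw [this, Set.ncard_image_of_injOn, Set.ncard_coe_finset, G.card_neighborFinset_eq_degree]
  intro w hw w' hw' h
  simp only [Finset.mem_coe, mem_neighborFinset] at hw hw'
  by_contra hne
  exact hc s(v, w) hw s(v, w') hw' (fun h => hne (Sym2.congr_right.1 h)) ⟨v, by simp, by simp⟩ h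

theorem aux_lower {V : Type*} [Fintype V]
    (G : SimpleGraph V) [DecidableRel G.Adj] (r : ℕ) (hr : 2 ≤ r)
    (hG : IsBiregular G r (2 * r)) (c : Sym2 V → ℕ) (hc : IsProperEdgeColoring G c) :
    3 ≤ (Set.range (palette G c)).ncard := by
  obtain ⟨X, Y, ⟨x, hx⟩, ⟨y, hy⟩, hd, hu, hadj, hdX, hdY⟩ := hG
  have cx := fun x hx => (aux_palette_card G c hc x).trans (hdX x hx)
  have cy := fun x hx => (aux_palette_card G c hc x).trans (hdY x hx)
  -- a colour at y missing at x
  have hnot : ¬ palette G c y ⊆ palette G c x := by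
    intro h
    have := Set.ncard_le_ncard h (Set.finite_of_ncard_ne_zero (by rw [cx x hx]; omega))
    rw [cx x hx, cy y hy] at this
    omega
  obtain ⟨n, hn, hnx⟩ := Set.not_subset.1 hnot
  have hn' := hn
  rw [aux_palette] at hn'
  obtain ⟨w, hw, hcw⟩ := hn'
  have hwX : w ∈ X := by
    rcases hadj y w hw with h | h
    · exact absurd hy (Finset.disjoint_left.1 hd h.1)
    · exact h.2
  have hnw : n ∈ palette G c w := by
    rw [aux_palette]
    exact ⟨y, hw.symm, by rw [Sym2.eq_swap]; exact hcw⟩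
  have h1 : palette G c x ≠ palette G c w := fun h => hnx (h ▸ hnw)
  have h2 : palette G c x ≠ palette G c y := fun h => hnx (h ▸ hn)
  have h3 : palette G c w ≠ palette G c y := by
    intro h
    have := cx w hwX
    rw [h, cy y hy] at this
    omega
  have h4 : ({palette G c x, palette G c w, palette G c y} : Set (Set ℕ)).ncard = 3 :=
    Set.ncard_eq_three.2 ⟨_, _, _, h1, h2, h3, rfl⟩
  rw [← h4]
  apply Set.ncard_le_ncard _ (Set.finite_range _)
  rintro _ (rfl | rfl | rfl) <;> exact ⟨_, rfl⟩

theorem aux_upper {V : Type*} [Fintype V]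
    (G : SimpleGraph V) [DecidableRel G.Adj] (r : ℕ) (hr : 2 ≤ r)
    (hG : IsBiregular G r (2 * r)) :
    ∃ c : Sym2 V → ℕ, IsProperEdgeColoring G c ∧
      (Set.range (palette G c)).ncard ≤ 2 ^ ((r + 1) / 2) + 1 := by
  classical
  obtain ⟨X, Y, -, -, hd, hu, hadj, hdX, hdY⟩ := hG
  have hXY : ∀ v w, v ∈ X → G.Adj v w → w ∈ Y := by
    intro v w hv h
    rcases hadj v w h with h | h
    · exact h.2
    · exact absurd h.1 (Finset.disjoint_left.1 hd hv)
  have hYX : ∀ v w, v ∈ Y → G.Adj v w → w ∈ X := by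
    intro v w hv h
    rcases hadj v w h with h | h
    · exact absurd hv (Finset.disjoint_left.1 hd h.1)
    · exact h.2
  obtain ⟨d, s, F, hd1, hd2, hd3, hd4⟩ := aux_color (X := X) (Y := Y) (fun x y => G.Adj x y) r (by
    intro x
    rw [← hdX x x.2, ← G.card_neighborFinset_eq_degree]
    apply Finset.card_bij (fun (y : Y) _ => (y : V))
    · intro y hy
      simpa using hy
    · intro y _ y' _ h
      exact Subtype.ext h
    · intro y hy
      simp only [mem_neighborFinset] at hy
      exact ⟨⟨y, hXY _ _ x.2 hy⟩, by simpa using hy, rfl⟩) (by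
    intro x
    rw [← hdY x x.2, ← G.card_neighborFinset_eq_degree]
    apply Finset.card_bij (fun (y : X) _ => (y : V))
    · intro y hy
      simpa [G.adj_comm] using hy
    · intro y _ y' _ h
      exact Subtype.ext h
    · intro y hy
      simp only [mem_neighborFinset] at hy
      exact ⟨⟨y, hYX _ _ x.2 hy⟩, by simpa using hy.symm, rfl⟩)
  let D : V → V → ℕ := fun v w =>
    if h : v ∈ X ∧ w ∈ Y then d ⟨v, h.1⟩ ⟨w, h.2⟩ else
    if h : w ∈ X ∧ v ∈ Y then d ⟨w, h.1⟩ ⟨v, h.2⟩ else 0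
  have hD1 : ∀ v w (hv : v ∈ X) (hw : w ∈ Y), D v w = d ⟨v, hv⟩ ⟨w, hw⟩ := by
    intro v w hv hw
    simp [D, hv, hw]
  have hD2 : ∀ v w (hv : v ∈ X) (hw : w ∈ Y), D w v = d ⟨v, hv⟩ ⟨w, hw⟩ := by
    intro v w hv hw
    have : w ∉ X := fun h => Finset.disjoint_left.1 hd h hw
    simp [D, hv, hw, this]
  have hsymm : ∀ v w, D v w = D w v := by
    intro v w
    by_cases h : v ∈ X ∧ w ∈ Y
    · rw [hD1 v w h.1 h.2, hD2 v w h.1 h.2]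
    · by_cases h' : w ∈ X ∧ v ∈ Y
      · rw [hD1 w v h'.1 h'.2, hD2 w v h'.1 h'.2]
      · simp only [D, h, h', dif_neg, not_false_eq_true]
  let c : Sym2 V → ℕ := Sym2.lift ⟨D, hsymm⟩
  have hcD : ∀ v w, c s(v, w) = D v w := fun v w => rfl
  have hc : IsProperEdgeColoring G c := by
    rintro e₁ h1 e₂ h2 hne ⟨v, hv1, hv2⟩ heq
    obtain ⟨w, rfl⟩ := Sym2.mem_iff_exists.1 hv1
    obtain ⟨w', rfl⟩ := Sym2.mem_iff_exists.1 hv2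
    rw [mem_edgeSet] at h1 h2
    rw [hcD, hcD] at heq
    apply hne
    rcases hu v with hv | hv
    · have hw := hXY v w hv h1
      have hw' := hXY v w' hv h2
      rw [hD1 v w hv hw, hD1 v w' hv hw'] at heq
      have := congrArg Subtype.val (hd2 ⟨v, hv⟩ ⟨w, hw⟩ ⟨w', hw'⟩ h1 h2 heq)
      simp only at this
      rw [this]
    · have hw := hYX v w hv h1
      have hw' := hYX v w' hv h2
      rw [hD2 w v hw hv, hD2 w' v hw' hv] at heq
      have := congrArg Subtype.val (hd3 ⟨w, hw⟩ ⟨w', hw'⟩ ⟨v, hv⟩ h1.symm h2.symm heq)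
      simp only at this
      rw [this]
  refine ⟨c, hc, ?_⟩
  have hsub : Set.range (palette G c) ⊆ insert (Set.Iio (2 * r)) (Set.range F) := by
    rintro _ ⟨v, rfl⟩
    rcases hu v with hv | hv
    · right
      refine ⟨s ⟨v, hv⟩, ?_⟩
      rw [← hd4, aux_palette]
      ext n
      simp only [Set.mem_setOf_eq]
      constructor
      · rintro ⟨y, h, rfl⟩
        exact ⟨y, h, by rw [hcD, hD1 v y hv y.2]⟩
      · rintro ⟨w, h, rfl⟩
        have hw := hXY v w hv h
        exact ⟨⟨w, hw⟩, h, by rw [hcD, hD1 v w hv hw]⟩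
    · left
      apply Set.eq_of_subset_of_ncard_le
      · rw [aux_palette]
        rintro n ⟨w, h, rfl⟩
        have hw := hYX v w hv h
        rw [hcD, hD2 w v hw hv]
        exact hd1 ⟨w, hw⟩ ⟨v, hv⟩ h.symm
      · rw [aux_palette_card G c hc, hdY v hv, ← Finset.coe_range, Set.ncard_coe_finset,
          Finset.card_range]
      · exact Set.finite_Iio _
  refine (Set.ncard_le_ncard hsub ((Set.finite_range F).insert _)).trans ?_
  refine (Set.ncard_insert_le _ _).trans ?_
  have : (Set.range F).ncard ≤ 2 ^ ((r + 1) / 2) := by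
    rw [← Set.image_univ]
    refine (Set.ncard_image_le Set.finite_univ).trans ?_
    rw [Set.ncard_univ, Nat.card_eq_fintype_card]
    simp
  omega

/-- If `G` is `(r,2r)`-biregular (`r ≥ 2`), then `3 ≤ š(G) ≤ 2^⌈r/2⌉ + 1`. -/
theorem palette_index_r_twoR_biregular {V : Type*} [Fintype V]
    (G : SimpleGraph V) [DecidableRel G.Adj] (r : ℕ) (hr : 2 ≤ r)
    (hG : IsBiregular G r (2 * r)) :
    3 ≤ paletteIndex G ∧ paletteIndex G ≤ 2 ^ ((r + 1) / 2) + 1 := by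
  obtain ⟨c, hc, hcard⟩ := aux_upper G r hr hG
  constructor
  · have hne : {k | ∃ c : Sym2 V → ℕ, IsProperEdgeColoring G c ∧
        (Set.range (palette G c)).ncard = k}.Nonempty := ⟨_, c, hc, rfl⟩
    obtain ⟨c', hc', h⟩ := Nat.sInf_mem hne
    unfold paletteIndex
    rw [← h]
    exact aux_lower G r hr hG c' hc'
  · refine le_trans ?_ hcard
    unfold paletteIndex
    apply Nat.sInf_le
    exact ⟨c, hc, rfl⟩
end

section
/- If G is a (3,5)-biregular bipartite graph, then 5 ≤ š(G) ≤ 7. -/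
open SimpleGraph Finset

theorem fpf_two (E : Type*) (f : E → E) (hf : ∀ e, f (f e) = e) (hn : ∀ e, f e ≠ e) :
    ∃ s : E → Bool, ∀ e, s (f e) = !(s e) := by
  classical
  let _ : LinearOrder E := linearOrderOfSTO WellOrderingRel
  refine ⟨fun e => decide (e < f e), fun e => ?_⟩
  rcases lt_or_gt_of_ne (hn e) with h | h
  · simp [hf, h, not_lt_of_gt h]
  · simp [hf, h, not_lt_of_gt h]

theorem fpf_pair (E : Type*) (f g : E → E) (hf : ∀ e, f (f e) = e) (hg : ∀ e, g (g e) = e)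
    (hfn : ∀ e, f e ≠ e) (hgn : ∀ e, g e ≠ e) :
    ∃ s : E → Bool, ∀ e, s (f e) = !(s e) ∧ s (g e) = !(s e) := by
  classical
  let F : Equiv.Perm E := ⟨f, f, hf, hf⟩
  let H : Equiv.Perm E := ⟨g, g, hg, hg⟩
  have hFF : F * F = 1 := by ext e; exact hf e
  have hHH : H * H = 1 := by ext e; exact hg e
  have hFi : F⁻¹ = F := inv_eq_of_mul_eq_one_left hFF
  have hHi : H⁻¹ = H := inv_eq_of_mul_eq_one_left hHH
  let σ : Equiv.Perm E := F * H
  have hconj : F * σ * F⁻¹ = σ⁻¹ := by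
    simp only [σ, mul_inv_rev, hFi, hHi]
    rw [← mul_assoc, hFF, one_mul]
  have hconjk : ∀ k : ℤ, ∀ e, F ((σ ^ k) e) = (σ ^ (-k)) (F e) := by
    intro k e
    have h1 : F * σ ^ k * F⁻¹ = σ ^ (-k) := by
      rw [← conj_zpow, hconj, inv_zpow, zpow_neg]
    rw [← h1]; simp
  let S : Setoid E := Equiv.Perm.SameCycle.setoid σ
  have hFS : ∀ a b : E, S.r a b → S.r (f a) (f b) := by
    rintro a b ⟨k, rfl⟩
    exact ⟨-k, (hconjk k a).symm⟩
  let f' : Quotient S → Quotient S := Quotient.map f hFS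
  have hne : ∀ e, ¬ S.r e (f e) := by
    rintro e ⟨k, hk⟩
    rcases Int.even_or_odd' k with ⟨j, rfl | rfl⟩
    · have h2 : F ((σ ^ j) e) = (σ ^ j) e := by
        rw [hconjk]
        have : F e = (σ ^ j) ((σ ^ j) e) := by
          rw [← Equiv.Perm.mul_apply, ← zpow_add, ← two_mul]; exact hk.symm
        rw [this, ← Equiv.Perm.mul_apply, ← zpow_add]; simp
      exact hfn _ h2
    · have h2 : F ((σ ^ j) e) = σ ((σ ^ j) e) := by
        rw [hconjk]
        have : F e = (σ ^ j) (σ ((σ ^ j) e)) := by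
          rw [← Equiv.Perm.mul_apply, ← Equiv.Perm.mul_apply, ← zpow_add_one, ← zpow_add]
          rw [show j + 1 + j = 2 * j + 1 by ring]; exact hk.symm
        rw [this, ← Equiv.Perm.mul_apply, ← zpow_add]; simp
      have h3 : (σ ^ j) e = H ((σ ^ j) e) := F.injective h2
      exact hgn _ h3.symm
  obtain ⟨s, hs⟩ := fpf_two (Quotient S) f'
    (by intro q; induction q using Quotient.inductionOn with
        | _ e => simp only [f', Quotient.map_mk, hf])
    (by intro q; induction q using Quotient.inductionOn with
        | _ e =>
          intro h
          simp only [f', Quotient.map_mk] at h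
          exact hne e (S.symm (Quotient.exact h)))
  have h1 : ∀ e, s (Quotient.mk S (f e)) = !(s (Quotient.mk S e)) := fun e => hs (Quotient.mk S e)
  refine ⟨fun e => s (Quotient.mk S e), fun e => ⟨h1 e, ?_⟩⟩
  have h2 : Quotient.mk S (f (g e)) = Quotient.mk S e :=
    Quotient.sound (S.symm ⟨1, by simp [σ, F, H]⟩)
  have := h1 (g e)
  rw [h2] at this
  simp [this]

theorem invol_pair (E : Type*) (f g : E → E) (hf : ∀ e, f (f e) = e) (hg : ∀ e, g (g e) = e) :
    ∃ s : E → Bool, ∀ e, (f e ≠ e → s (f e) = !(s e)) ∧ (g e ≠ e → s (g e) = !(s e)) := by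
  classical
  have key : ∀ f : E → E, (∀ e, f (f e) = e) → ∃ F : E × Bool → E × Bool,
      (∀ z, F (F z) = z) ∧ (∀ z, F z ≠ z) ∧ ∀ e, f e ≠ e → F (e, true) = (f e, true) := by
    intro f hf
    refine ⟨fun z => if f z.1 = z.1 then (z.1, !z.2) else (f z.1, z.2), ?_, ?_, ?_⟩
    · rintro ⟨e, b⟩
      by_cases h : f e = e
      · simp [h]
      · simp [h, hf, Ne.symm h]
    · rintro ⟨e, b⟩
      by_cases h : f e = e
      · simp [h]
      · simp [h]
    · intro e h; simp [h]
  obtain ⟨F, hF1, hF2, hF3⟩ := key f hf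
  obtain ⟨H, hH1, hH2, hH3⟩ := key g hg
  obtain ⟨s, hs⟩ := fpf_pair _ F H hF1 hH1 hF2 hH2
  refine ⟨fun e => s (e, true), fun e => ⟨fun h => ?_, fun h => ?_⟩⟩
  · dsimp only; rw [← hF3 e h]; exact (hs _).1
  · dsimp only; rw [← hH3 e h]; exact (hs _).2

theorem invol_fin (F : Type*) [Finite F] :
    ∃ g : F → F, (∀ e, g (g e) = e) ∧ ∀ a b, g a = a → g b = b → a = b := by
  obtain ⟨n, ⟨φ⟩⟩ := Finite.exists_equiv_fin F
  let k : Fin n → Fin n := fun i =>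
    ⟨if i.1 % 2 = 0 then (if i.1 + 1 < n then i.1 + 1 else i.1) else i.1 - 1, by
      have := i.2; split_ifs <;> omega⟩
  have hk : ∀ i, k (k i) = i := by
    intro i; have := i.2
    ext; simp only [k]; split_ifs <;> omega
  have hk2 : ∀ i j, k i = i → k j = j → i = j := by
    intro i j hi hj
    have := i.2; have := j.2
    have hi := congrArg Fin.val hi
    have hj := congrArg Fin.val hj
    ext; simp only [k] at hi hj; split_ifs at hi hj <;> omega
  refine ⟨fun e => φ.symm (k (φ e)), fun e => by simp [hk], fun a b ha hb => ?_⟩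
  apply φ.injective
  apply hk2
  · exact (Equiv.symm_apply_eq φ).1 ha
  · exact (Equiv.symm_apply_eq φ).1 hb

theorem invol_fib {E A : Type*} [Finite E] (p : E → A) :
    ∃ f : E → E, (∀ e, f (f e) = e) ∧ (∀ e, p (f e) = p e) ∧
      ∀ a b, p a = p b → f a = a → f b = b → a = b := by
  choose g hg1 hg2 using fun a => invol_fin {e // p e = a}
  let f : E → E := fun e => (g (p e) ⟨e, rfl⟩).1
  have hf : ∀ a (z : {e // p e = a}), f z.1 = (g a z).1 := by
    rintro a ⟨e, rfl⟩; rfl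
  refine ⟨f, fun e => ?_, fun e => (g (p e) ⟨e, rfl⟩).2, fun a b hab ha hb => ?_⟩
  · show f (g (p e) ⟨e, rfl⟩).1 = e
    rw [hf, hg1]
  · have h1 := hf (p b) ⟨a, hab⟩
    have h2 := hf (p b) ⟨b, rfl⟩
    have := hg2 (p b) ⟨a, hab⟩ ⟨b, rfl⟩ (Subtype.ext (by rw [← h1]; exact ha))
      (Subtype.ext (by rw [← h2]; exact hb))
    exact congrArg Subtype.val this

open Classical in
theorem balanced_key {E A : Type*} [Fintype E] (s : E → Bool) (p : E → A) (f : E → E)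
    (hf : ∀ e, f (f e) = e) (hpf : ∀ e, p (f e) = p e)
    (hf1 : ∀ a b, p a = p b → f a = a → f b = b → a = b)
    (hs : ∀ e, f e ≠ e → s (f e) = !(s e)) (a : A) (b : Bool) :
    2 * #{e | p e = a ∧ s e = b} ≤ #{e | p e = a} + 1 := by
  have h1 : #{e | p e = a} = #{e | p e = a ∧ s e = b} + #{e | p e = a ∧ s e = !b} := by
    rw [← Finset.card_filter_add_card_filter_not (s := {e | p e = a}) (fun e => s e = b),
      Finset.filter_filter, Finset.filter_filter]
    congr 2
    ext e; simp only [Finset.mem_filter]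
    cases s e <;> cases b <;> simp
  have h2 : #{e | p e = a ∧ s e = b} = #{e | (p e = a ∧ s e = b) ∧ f e = e}
      + #{e | (p e = a ∧ s e = b) ∧ ¬ f e = e} := by
    rw [← Finset.card_filter_add_card_filter_not (s := {e | p e = a ∧ s e = b}) (fun e => f e = e),
      Finset.filter_filter, Finset.filter_filter]
  have h3 : #{e | (p e = a ∧ s e = b) ∧ f e = e} ≤ 1 := by
    rw [Finset.card_le_one]
    intro x hx y hy
    simp only [Finset.mem_filter, Finset.mem_univ, true_and] at hx hy
    exact hf1 x y (hx.1.1.trans hy.1.1.symm) hx.2 hy.2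
  have h4 : #{e | (p e = a ∧ s e = b) ∧ ¬ f e = e} ≤ #{e | p e = a ∧ s e = !b} := by
    apply Finset.card_le_card_of_injOn f
    · intro x hx
      simp only [Finset.coe_filter, Finset.mem_univ, true_and, Set.mem_ofPred_eq] at hx ⊢
      rw [hpf, hs x hx.2, hx.1.2]
      exact ⟨hx.1.1, rfl⟩
    · intro x _ y _ hxy
      rw [← hf x, hxy, hf]
  omega

open Classical in
theorem balanced {E A B : Type*} [Fintype E] (p : E → A) (q : E → B) :
    ∃ s : E → Bool,
      (∀ a b, 2 * #{e | p e = a ∧ s e = b} ≤ #{e | p e = a} + 1) ∧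
      (∀ a b, 2 * #{e | q e = a ∧ s e = b} ≤ #{e | q e = a} + 1) := by
  obtain ⟨f, hf, hpf, hf1⟩ := invol_fib p
  obtain ⟨g, hg, hqg, hg1⟩ := invol_fib q
  obtain ⟨s, hs⟩ := invol_pair E f g hf hg
  exact ⟨s, balanced_key s p f hf hpf hf1 (fun e => (hs e).1), balanced_key s q g hg hqg hg1 (fun e => (hs e).2)⟩

theorem proper_ne {V : Type*} {G : SimpleGraph V} {c : Sym2 V → ℕ} (hc : IsProperEdgeColoring G c)
    {v a b : V} (ha : G.Adj v a) (hb : G.Adj v b) (h : c s(v, a) = c s(v, b)) : a = b := by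
  by_contra hab
  exact hc s(v, a) ha s(v, b) hb (fun h => hab (Sym2.congr_right.1 h)) ⟨v, by simp, by simp⟩ h

theorem mem_palette {V : Type*} {G : SimpleGraph V} {c : Sym2 V → ℕ} {v : V} {n : ℕ} :
    n ∈ palette G c v ↔ ∃ w, G.Adj v w ∧ c s(v, w) = n := by
  constructor
  · rintro ⟨e, he, hv, rfl⟩
    obtain ⟨w, rfl⟩ := Sym2.mem_iff_exists.1 hv
    exact ⟨w, he, rfl⟩
  · rintro ⟨w, hw, rfl⟩
    exact ⟨s(v, w), hw, by simp, rfl⟩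

theorem palette_fin {V : Type*} [Fintype V] {G : SimpleGraph V} [DecidableRel G.Adj]
    {c : Sym2 V → ℕ} (hc : IsProperEdgeColoring G c) (v : V) :
    ∃ P : Finset ℕ, (P : Set ℕ) = palette G c v ∧ #P = G.degree v := by
  refine ⟨(G.neighborFinset v).image (fun w => c s(v, w)), ?_, ?_⟩
  · ext n; simp [mem_palette]
  · rw [Finset.card_image_of_injOn, SimpleGraph.card_neighborFinset_eq_degree]
    intro a ha b hb h
    exact proper_ne hc (by simpa using ha) (by simpa using hb) h

theorem count_le {V : Type*} [Fintype V] {G : SimpleGraph V}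
    {c : Sym2 V → ℕ} (hc : IsProperEdgeColoring G c) (pal : V → Finset ℕ)
    (hp : ∀ v, (pal v : Set ℕ) = palette G c v) (X Y : Finset V)
    (h : ∀ x ∈ X, ∀ y, G.Adj x y → y ∈ Y) (n : ℕ) :
    #{x ∈ X | n ∈ pal x} ≤ #{y ∈ Y | n ∈ pal y} := by
  have hm : ∀ v, n ∈ pal v ↔ ∃ w, G.Adj v w ∧ c s(v, w) = n := by
    intro v; rw [← Finset.mem_coe, hp, mem_palette]
  have : ∀ x : V, ∃ w, n ∈ pal x → (G.Adj x w ∧ c s(x, w) = n) := by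
    intro x
    by_cases hx : n ∈ pal x
    · obtain ⟨w, hw⟩ := (hm x).1 hx
      exact ⟨w, fun _ => hw⟩
    · exact ⟨x, fun h => absurd h hx⟩
  choose f hf using this
  apply Finset.card_le_card_of_injOn f
  · intro x hx
    have hx : x ∈ X ∧ n ∈ pal x := by simpa using hx
    have := hf x hx.2
    have h2 : f x ∈ Y ∧ n ∈ pal (f x) :=
      ⟨h x hx.1 _ this.1, (hm _).2 ⟨x, this.1.symm, by rw [Sym2.eq_swap]; exact this.2⟩⟩
    simpa using h2
  · intro x hx y hy hxy
    have hx : x ∈ X ∧ n ∈ pal x := by simpa using hx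
    have hy : n ∈ pal y := (by simpa using hy : y ∈ X ∧ n ∈ pal y).2
    have h1 := hf x hx.2
    have h2 := hf y hy
    rw [← hxy] at h2
    apply proper_ne hc h1.1.symm h2.1.symm
    rw [Sym2.eq_swap, h1.2, Sym2.eq_swap, h2.2]

/-- Purely numerical core of the lower bound. -/
theorem lower_core {V : Type*} (X Y : Finset V) (pal : V → Finset ℕ)
    (hY : Y.Nonempty) (hcard : #X * 3 = #Y * 5)
    (h3 : ∀ x ∈ X, #(pal x) = 3) (h5 : ∀ y ∈ Y, #(pal y) = 5)
    (hcount : ∀ n, #{x ∈ X | n ∈ pal x} = #{y ∈ Y | n ∈ pal y}) :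
    5 ≤ #(X.image pal) + #(Y.image pal) := by
  classical
  by_contra hlt
  have hYpos : 0 < #Y := hY.card_pos
  have hXpos : 0 < #X := by omega
  have hX : X.Nonempty := Finset.card_pos.1 hXpos
  have hle : ∀ n, #{y ∈ Y | n ∈ pal y} ≤ #Y := fun n => Finset.card_filter_le _ _
  -- no color in all X palettes
  have hno : ∀ n, ¬ ∀ A ∈ X.image pal, n ∈ A := by
    intro n hn
    have : #{x ∈ X | n ∈ pal x} = #X := by
      rw [Finset.filter_true_of_mem]
      intro x hx; exact hn _ (Finset.mem_image_of_mem _ hx)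
    have := hle n
    have := hcount n
    omega
  have hall : ∀ n, (∀ B ∈ Y.image pal, n ∈ B) → #{x ∈ X | n ∈ pal x} = #Y := by
    intro n hn
    rw [hcount n, Finset.filter_true_of_mem]
    intro x hx; exact hn _ (Finset.mem_image_of_mem _ hx)
  have hA3 : ∀ A ∈ X.image pal, #A = 3 := by
    intro A hA; obtain ⟨x, hx, rfl⟩ := Finset.mem_image.1 hA; exact h3 x hx
  have hB5 : ∀ B ∈ Y.image pal, #B = 5 := by
    intro A hA; obtain ⟨x, hx, rfl⟩ := Finset.mem_image.1 hA; exact h5 x hx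
  have hsub : ∀ n, (∃ A ∈ X.image pal, n ∈ A) ↔ (∃ B ∈ Y.image pal, n ∈ B) := by
    have e : ∀ (Z : Finset V) n, (∃ A ∈ Z.image pal, n ∈ A) ↔ 0 < #{x ∈ Z | n ∈ pal x} := by
      intro Z n
      rw [Finset.card_pos]
      constructor
      · rintro ⟨A, hA, hn⟩
        obtain ⟨x, hx, rfl⟩ := Finset.mem_image.1 hA
        exact ⟨x, by simp [hx, hn]⟩
      · rintro ⟨x, hx⟩
        rw [Finset.mem_filter] at hx
        exact ⟨_, Finset.mem_image_of_mem _ hx.1, hx.2⟩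
    intro n; rw [e, e, hcount]
  have hi : 0 < #(X.image pal) := (hX.image pal).card_pos
  have hj : 0 < #(Y.image pal) := (hY.image pal).card_pos
  have hsum : #X = ∑ A ∈ X.image pal, #{x ∈ X | pal x = A} :=
    Finset.card_eq_sum_card_image pal X
  have hmemX : ∀ x ∈ X, pal x ∈ X.image pal := fun x hx => Finset.mem_image_of_mem _ hx
  generalize X.image pal = PX at *
  generalize Y.image pal = PY at *
  have inter_big : ∀ (S T U : Finset ℕ), S ⊆ U → T ⊆ U → #U < #S + #T → ∃ n, n ∈ S ∧ n ∈ T := by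
    intro S T U hS hT h
    have h1 := Finset.card_union_add_card_inter S T
    have h2 := Finset.card_le_card (Finset.union_subset hS hT)
    obtain ⟨n, hn⟩ := Finset.card_pos.1 (show 0 < #(S ∩ T) by omega)
    exact ⟨n, (Finset.mem_inter.1 hn).1, (Finset.mem_inter.1 hn).2⟩
  have hi1 : #PX ≠ 1 := by
    intro h
    obtain ⟨A, rfl⟩ := Finset.card_eq_one.1 h
    obtain ⟨n, hn⟩ := Finset.card_pos.1 (show 0 < #A by rw [hA3 A (by simp)]; norm_num)
    exact hno n (by simpa using hn)
  have cases : (#PY = 1 ∧ #PX = 2) ∨ (#PY = 1 ∧ #PX = 3) ∨ (#PY = 2 ∧ #PX = 2) := by omega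
  rcases cases with ⟨hy, hx⟩ | ⟨hy, hx⟩ | ⟨hy, hx⟩
  · obtain ⟨B, rfl⟩ := Finset.card_eq_one.1 hy
    obtain ⟨A, A', hne, rfl⟩ := Finset.card_eq_two.1 hx
    obtain ⟨n, h1, h2⟩ := inter_big A A' B
      (fun n hn => by simpa using (hsub n).1 ⟨A, by simp, hn⟩)
      (fun n hn => by simpa using (hsub n).1 ⟨A', by simp, hn⟩)
      (by rw [hA3 A (by simp), hA3 A' (by simp), hB5 B (by simp)]; norm_num)
    exact hno n (by simp [h1, h2])
  · obtain ⟨B, rfl⟩ := Finset.card_eq_one.1 hy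
    obtain ⟨A1, A2, A3, h12, h13, h23, rfl⟩ := Finset.card_eq_three.1 hx
    have hsum' : #X = #{x ∈ X | pal x = A1} + #{x ∈ X | pal x = A2} + #{x ∈ X | pal x = A3} := by
      rw [hsum, Finset.sum_insert (by simp [h12, h13]), Finset.sum_insert (by simp [h23]),
        Finset.sum_singleton, add_assoc]
    have pairc : ∀ A A' A'' : Finset ℕ, ({A1, A2, A3} : Finset (Finset ℕ)) = {A, A', A''} →
        #{x ∈ X | pal x = A''} + #Y = #X := by
      intro A A' A'' he
      rw [he] at hno hA3 hsub hmemX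
      obtain ⟨n, h1, h2⟩ := inter_big A A' B
        (fun n hn => by simpa using (hsub n).1 ⟨A, by simp, hn⟩)
        (fun n hn => by simpa using (hsub n).1 ⟨A', by simp, hn⟩)
        (by rw [hA3 A (by simp), hA3 A' (by simp), hB5 B (by simp)]; norm_num)
      have hnB : n ∈ B := by simpa using (hsub n).1 ⟨A, by simp, h1⟩
      have hn3 : n ∉ A'' := fun h => hno n (by simp [h1, h2, h])
      have h4 := hall n (by simpa using hnB)
      have h5 := Finset.card_filter_add_card_filter_not (s := X) (fun x => pal x = A'')
      have h6 : {x ∈ X | ¬ pal x = A''} = {x ∈ X | n ∈ pal x} := by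
        apply Finset.filter_congr
        intro x hx
        have := hmemX x hx
        simp only [Finset.mem_insert, Finset.mem_singleton] at this
        constructor
        · intro h; rcases this with h' | h' | h'
          · rw [h']; exact h1
          · rw [h']; exact h2
          · exact absurd h' h
        · intro h h'; rw [h'] at h; exact hn3 h
      rw [h6, h4] at h5
      exact h5
    have e1 := pairc A1 A2 A3 rfl
    have e2 := pairc A1 A3 A2 (by ext; simp; tauto)
    have e3 := pairc A2 A3 A1 (by ext; simp; tauto)
    omega
  · obtain ⟨B, B', -, rfl⟩ := Finset.card_eq_two.1 hy
    obtain ⟨A, A', hne, rfl⟩ := Finset.card_eq_two.1 hx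
    have hsum' : #X = #{x ∈ X | pal x = A} + #{x ∈ X | pal x = A'} := by
      rw [hsum, Finset.sum_insert (by simp [hne]), Finset.sum_singleton]
    have hdis : ∀ n, n ∈ A → n ∉ A' := fun n h1 h2 => hno n (by simp [h1, h2])
    have hBs : ∀ n, n ∈ B ∨ n ∈ B' → n ∈ A ∨ n ∈ A' := by
      intro n h; simpa using (hsub n).2 (by simpa using h)
    have hU : #(A ∪ A') ≤ 6 := by
      have := Finset.card_union_le A A'
      rw [hA3 A (by simp), hA3 A' (by simp)] at this; exact this
    have hI : 4 ≤ #(B ∩ B') := by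
      have h1 := Finset.card_union_add_card_inter B B'
      have h2 : B ∪ B' ⊆ A ∪ A' := by
        intro n hn; rw [Finset.mem_union] at *; exact hBs n hn
      have h3 := Finset.card_le_card h2
      rw [hB5 B (by simp), hB5 B' (by simp)] at h1
      omega
    have hIs : B ∩ B' ⊆ A ∪ A' := by
      intro n hn
      rw [Finset.mem_inter] at hn; rw [Finset.mem_union]; exact hBs n (Or.inl hn.1)
    have one : ∀ C C' : Finset ℕ, ({A, A'} : Finset (Finset ℕ)) = {C, C'} → C ⊆ A ∪ A' →
        (∀ n, n ∈ C → n ∉ C') →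
        #{x ∈ X | pal x = C} = #Y := by
      intro C C' he hC hd
      rw [he] at hA3 hmemX
      obtain ⟨n, h1, h2⟩ := inter_big C (B ∩ B') (A ∪ A') hC hIs
        (by rw [hA3 C (by simp)]; omega)
      rw [Finset.mem_inter] at h2
      rw [← hall n (by simp [h2.1, h2.2])]
      congr 1
      apply Finset.filter_congr
      intro x hx
      have := hmemX x hx
      simp only [Finset.mem_insert, Finset.mem_singleton] at this
      constructor
      · intro h; rw [h]; exact h1
      · intro h
        rcases this with h' | h'
        · exact h'
        · rw [h'] at h; exact absurd h (hd n h1)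
    have e1 := one A A' rfl Finset.subset_union_left hdis
    have e2 := one A' A (Finset.pair_comm _ _) Finset.subset_union_right (fun n h h' => hdis n h' h)
    omega

theorem card_rel {V : Type*} [Fintype V]
    (G : SimpleGraph V) [DecidableRel G.Adj] (X Y : Finset V) (hd : Disjoint X Y)
    (hadj : ∀ v w, G.Adj v w → (v ∈ X ∧ w ∈ Y) ∨ (v ∈ Y ∧ w ∈ X))
    (hX : ∀ v ∈ X, G.degree v = 3) (hY : ∀ v ∈ Y, G.degree v = 5) : #X * 3 = #Y * 5 := by
  classical
  have hb : G.IsBipartiteWith (X : Set V) (Y : Set V) :=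
    ⟨by exact_mod_cast hd, fun v w h => by simpa using hadj v w h⟩
  have := SimpleGraph.isBipartiteWith_sum_degrees_eq hb
  rw [Finset.sum_congr rfl hX, Finset.sum_congr rfl hY] at this
  simpa using this

theorem lower {V : Type*} [Fintype V]
    (G : SimpleGraph V) [DecidableRel G.Adj] (hG : IsBiregular G 3 5)
    (c : Sym2 V → ℕ) (hc : IsProperEdgeColoring G c) :
    5 ≤ (Set.range (palette G c)).ncard := by
  classical
  obtain ⟨X, Y, hXn, hYn, hd, hcov, hadj, hX, hY⟩ := hG
  choose pal hpal hpc using palette_fin hc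
  have hXY : ∀ x ∈ X, ∀ y, G.Adj x y → y ∈ Y := by
    intro x hx y h
    rcases hadj x y h with h | h
    · exact h.2
    · exact absurd h.1 (Finset.disjoint_left.1 hd hx)
  have hYX : ∀ x ∈ Y, ∀ y, G.Adj x y → y ∈ X := by
    intro x hx y h
    rcases hadj x y h with h | h
    · exact absurd hx (Finset.disjoint_left.1 hd h.1)
    · exact h.2
  have h := lower_core X Y pal hYn (card_rel G X Y hd hadj hX hY)
    (fun x hx => (hpc x).trans (hX x hx)) (fun x hx => (hpc x).trans (hY x hx))
    (fun n => le_antisymm (count_le hc pal hpal X Y hXY n) (count_le hc pal hpal Y X hYX n))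
  have hdis : Disjoint (X.image pal) (Y.image pal) := by
    rw [Finset.disjoint_left]
    intro A hA hB
    obtain ⟨x, hx, rfl⟩ := Finset.mem_image.1 hA
    obtain ⟨y, hy, hxy⟩ := Finset.mem_image.1 hB
    have h1 := (hpc x).trans (hX x hx)
    have h2 := (hpc y).trans (hY y hy)
    rw [hxy] at h2; omega
  rw [← Finset.card_union_of_disjoint hdis] at h
  refine h.trans ?_
  rw [← Set.ncard_coe_finset, ← Set.ncard_image_of_injective _ Finset.coe_injective]
  apply Set.ncard_le_ncard _ (Set.toFinite _)
  rintro _ ⟨A, hA, rfl⟩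
  rw [Finset.mem_coe, Finset.mem_union, Finset.mem_image, Finset.mem_image] at hA
  rcases hA with ⟨x, _, rfl⟩ | ⟨x, _, rfl⟩
  · exact ⟨x, (hpal x).symm⟩
  · exact ⟨x, (hpal x).symm⟩

theorem exists_matching {V : Type*} [Fintype V]
    (G : SimpleGraph V) [DecidableRel G.Adj] (X Y : Finset V)
    (hYX : ∀ x ∈ Y, ∀ y, G.Adj x y → y ∈ X)
    (hX : ∀ v ∈ X, G.degree v = 3) (hY : ∀ v ∈ Y, G.degree v = 5) :
    ∃ m : V → V, (∀ y ∈ Y, G.Adj y (m y)) ∧ ∀ y ∈ Y, ∀ y' ∈ Y, m y = m y' → y = y' := by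
  classical
  obtain ⟨f, hf, hf2⟩ := (Finset.all_card_le_biUnion_card_iff_exists_injective
    (fun y : {y // y ∈ Y} => G.neighborFinset y.1)).1 (by
      intro S
      have := Finset.card_mul_le_card_mul (s := S)
        (t := S.biUnion fun y => G.neighborFinset y.1) (fun y x => G.Adj y.1 x) (m := 5) (n := 3)
        (by
          intro y hy
          rw [← hY y.1 y.2, ← SimpleGraph.card_neighborFinset_eq_degree]
          apply Finset.card_le_card
          intro x hx
          rw [Finset.mem_bipartiteAbove]
          exact ⟨Finset.mem_biUnion.2 ⟨y, hy, hx⟩, by simpa using hx⟩)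
        (by
          intro x hx
          obtain ⟨y, hy, hxy⟩ := Finset.mem_biUnion.1 hx
          have hxX := hYX y.1 y.2 x (by simpa using hxy)
          rw [← hX x hxX, ← SimpleGraph.card_neighborFinset_eq_degree]
          apply Finset.card_le_card_of_injOn Subtype.val
          · intro z hz
            have hz := (Finset.mem_bipartiteBelow _).1 (Finset.mem_coe.1 hz)
            simpa using hz.2.symm
          · exact Subtype.val_injective.injOn)
      omega)
  refine ⟨fun y => if h : y ∈ Y then f ⟨y, h⟩ else y, ?_, ?_⟩
  · intro y hy
    have := hf2 ⟨y, hy⟩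
    simpa [hy] using this
  · intro y hy y' hy' h
    simp only [hy, hy', dif_pos] at h
    exact congrArg Subtype.val (hf h)

theorem card_le_add_of {E : Type*} [Fintype E] (P Q R : E → Prop) [DecidablePred P]
    [DecidablePred Q] [DecidablePred R] (h : ∀ e, P e → Q e ∨ R e) :
    #{e | P e} ≤ #{e | Q e} + #{e | R e} := by
  classical
  refine (Finset.card_le_card ?_).trans (Finset.card_union_le _ _)
  intro e he
  simpa using h e (by simpa using he)

open Classical in
/-- Abstract edge splitting into four classes. -/
theorem split_four {E V : Type*} [Fintype E] (px py : E → V) (D : V → Prop)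
    (hy : ∀ y, #{e | py e = y} ≤ 4) (hx : ∀ x, #{e | px e = x} ≤ 3)
    (hD : ∀ x, D x → #{e | px e = x} ≤ 2) :
    ∃ s r : E → Bool,
      (∀ e e', py e = py e' → s e = s e' → r e = r e' → e = e') ∧
      (∀ e e', px e = px e' → s e = s e' → r e = r e' → e = e') ∧
      (∀ e e', px e = px e' → D (px e) → s e = s e') := by
  have uniq : ∀ (P : E → Prop) [DecidablePred P], 2 * #{e | P e} ≤ 3 → ∀ e e', P e → P e' → e = e' := by
    intro P _ h e e' he he'
    have : #{e | P e} ≤ 1 := by omega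
    exact Finset.card_le_one.1 this e (by simpa using he) e' (by simpa using he')
  obtain ⟨o, ho1, ho2⟩ := balanced py px
  obtain ⟨t, ht1, ht2⟩ := balanced (fun e => (py e, o e))
    (fun e => (px e, if D (px e) then false else o e))
  have a1 : ∀ y b, #{e | py e = y ∧ o e = b} ≤ 2 := by
    intro y b; have := ho1 y b; have := hy y; omega
  have a2 : ∀ x b, #{e | px e = x ∧ o e = b} ≤ 2 := by
    intro x b; have := ho2 x b; have := hx x; omega
  have b1 : ∀ y b d, 2 * #{e | (py e = y ∧ o e = b) ∧ t e = d} ≤ 3 := by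
    intro y b d; have := ht1 (y, b) d; simp only [Prod.mk.injEq] at this
    have := a1 y b; omega
  have b2 : ∀ x b d, ¬ D x → 2 * #{e | (px e = x ∧ o e = b) ∧ t e = d} ≤ 3 := by
    intro x b d hx
    have h := ht2 (x, b) d; simp only [Prod.mk.injEq] at h
    have e1 : ∀ e, (px e = x ∧ (if D (px e) then false else o e) = b) ↔ (px e = x ∧ o e = b) := by
      intro e
      constructor
      · rintro ⟨rfl, h'⟩; rw [if_neg hx] at h'; exact ⟨rfl, h'⟩
      · rintro ⟨rfl, h'⟩; rw [if_neg hx]; exact ⟨rfl, h'⟩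
    simp only [e1] at h
    have := a2 x b; omega
  have b3 : ∀ x d, D x → 2 * #{e | px e = x ∧ t e = d} ≤ 3 := by
    intro x d hx
    have h := ht2 (x, false) d; simp only [Prod.mk.injEq] at h
    have e1 : ∀ e, (px e = x ∧ (if D (px e) then false else o e) = false) ↔ (px e = x) := by
      intro e
      constructor
      · rintro ⟨rfl, h⟩; rfl
      · rintro rfl; rw [if_pos hx]; exact ⟨rfl, rfl⟩
    simp only [e1] at h
    have := hD x hx; omega
  have b4 : ∀ x d, D x → 2 * #{e | px e = x ∧ o e = d} ≤ 3 := by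
    intro x d hx
    have := ho2 x d; have := hD x hx; omega
  have xb : ∀ t o b : Bool, xor t o = b → (o = true ∧ t = !b) ∨ (o = false ∧ t = b) := by decide
  let s : E → Bool := fun e => xor (t e) (o e)
  have c1 : ∀ y b, #{e | py e = y ∧ s e = b} ≤ 2 := by
    intro y b
    have h := card_le_add_of (fun e => py e = y ∧ s e = b)
      (fun e => (py e = y ∧ o e = true) ∧ t e = !b) (fun e => (py e = y ∧ o e = false) ∧ t e = b)
      (by
        rintro e ⟨h1, h2⟩
        rcases xb _ _ _ h2 with h | h
        · exact Or.inl ⟨⟨h1, h.1⟩, h.2⟩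
        · exact Or.inr ⟨⟨h1, h.1⟩, h.2⟩)
    have := b1 y true (!b); have := b1 y false b; omega
  have c2 : ∀ x b, #{e | px e = x ∧ s e = b} ≤ 2 := by
    intro x b
    by_cases hDx : D x
    · refine le_trans (Finset.card_le_card ?_) (hD x hDx)
      intro e he
      simp only [Finset.mem_filter, Finset.mem_univ, true_and] at he ⊢
      exact he.1
    have h := card_le_add_of (fun e => px e = x ∧ s e = b)
      (fun e => (px e = x ∧ o e = true) ∧ t e = !b) (fun e => (px e = x ∧ o e = false) ∧ t e = b)
      (by
        rintro e ⟨h1, h2⟩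
        rcases xb _ _ _ h2 with h | h
        · exact Or.inl ⟨⟨h1, h.1⟩, h.2⟩
        · exact Or.inr ⟨⟨h1, h.1⟩, h.2⟩)
    have := b2 x true (!b) hDx; have := b2 x false b hDx; omega
  obtain ⟨r, hr1, hr2⟩ := balanced (fun e => (py e, s e)) (fun e => (px e, s e))
  refine ⟨s, r, ?_, ?_, ?_⟩
  · intro e e' h1 h2 h3
    refine uniq (fun z => (py z = py e' ∧ s z = s e') ∧ r z = r e') ?_ e e' ⟨⟨h1, h2⟩, h3⟩
      ⟨⟨rfl, rfl⟩, rfl⟩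
    have h := hr1 (py e', s e') (r e'); simp only [Prod.mk.injEq] at h
    have := c1 (py e') (s e'); omega
  · intro e e' h1 h2 h3
    refine uniq (fun z => (px z = px e' ∧ s z = s e') ∧ r z = r e') ?_ e e' ⟨⟨h1, h2⟩, h3⟩
      ⟨⟨rfl, rfl⟩, rfl⟩
    have h := hr2 (px e', s e') (r e'); simp only [Prod.mk.injEq] at h
    have := c2 (px e') (s e'); omega
  · intro e e' h1 hDe
    by_cases hee : e = e'
    · rw [hee]
    have n1 : t e ≠ t e' := fun h =>
      hee (uniq (fun z => px z = px e ∧ t z = t e) (b3 _ (t e) hDe) e e' ⟨rfl, rfl⟩ ⟨h1.symm, h.symm⟩)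
    have n2 : o e ≠ o e' := fun h =>
      hee (uniq (fun z => px z = px e ∧ o z = o e) (b4 _ (o e) hDe) e e' ⟨rfl, rfl⟩ ⟨h1.symm, h.symm⟩)
    simp only [s]
    revert n1 n2
    cases t e <;> cases t e' <;> cases o e <;> cases o e' <;> simp

theorem exists_col {V : Type*} [Fintype V]
    (G : SimpleGraph V) [DecidableRel G.Adj] (X Y : Finset V)
    (hYX : ∀ x ∈ Y, ∀ y, G.Adj x y → y ∈ X)
    (hX : ∀ v ∈ X, G.degree v = 3) (hY : ∀ v ∈ Y, G.degree v = 5) :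
    ∃ col : V → V → ℕ, (∀ x y, col x y < 5) ∧
      (∀ x ∈ X, ∀ y ∈ Y, ∀ y' ∈ Y, G.Adj x y → G.Adj x y' → col x y = col x y' → y = y') ∧
      (∀ y ∈ Y, ∀ x ∈ X, ∀ x' ∈ X, G.Adj x y → G.Adj x' y → col x y = col x' y → x = x') ∧
      (∀ x ∈ X, ∀ y ∈ Y, ∀ y' ∈ Y, ∀ y'' ∈ Y, G.Adj x y → G.Adj x y' → G.Adj x y'' →
        col x y = 4 → col x y' ≠ 4 → col x y'' ≠ 4 → col x y' / 2 = col x y'' / 2) := by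
  classical
  obtain ⟨m, hm1, hm2⟩ := exists_matching G X Y hYX hX hY
  let E := {p : V × V // p.1 ∈ X ∧ p.2 ∈ Y ∧ G.Adj p.1 p.2 ∧ m p.2 ≠ p.1}
  have ey : ∀ y, #{e : E | e.1.2 = y} ≤ 4 := by
    intro y
    by_cases hy : y ∈ Y
    · have h1 : #((G.neighborFinset y).erase (m y)) = 4 := by
        rw [Finset.card_erase_of_mem (by simpa using hm1 y hy),
          SimpleGraph.card_neighborFinset_eq_degree, hY y hy]
      rw [← h1]
      apply Finset.card_le_card_of_injOn (fun e => e.1.1)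
      · rintro ⟨⟨x, y'⟩, h⟩ he
        have he : y' = y := by simpa using he
        subst he
        exact Finset.mem_coe.2 (Finset.mem_erase.2
          ⟨Ne.symm h.2.2.2, (SimpleGraph.mem_neighborFinset _ _ _).2 h.2.2.1.symm⟩)
      · intro e he e' he' h
        have he : e.1.2 = y := by simpa using he
        have he' : e'.1.2 = y := by simpa using he'
        exact Subtype.ext (Prod.ext h (he.trans he'.symm))
    · rw [Finset.filter_false_of_mem]
      · simp
      · rintro e - rfl; exact hy e.2.2.1
  have exg : ∀ x ∈ X, ∀ S : Finset V, (∀ y ∈ Y, G.Adj x y → m y ≠ x → y ∈ S) →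
      #{e : E | e.1.1 = x} ≤ #S := by
    intro x hx S hS
    apply Finset.card_le_card_of_injOn (fun e => e.1.2)
    · rintro ⟨⟨x', y⟩, h⟩ he
      have he : x' = x := by simpa using he
      subst he
      exact hS _ h.2.1 h.2.2.1 h.2.2.2
    · intro e he e' he' h
      have he : e.1.1 = x := by simpa using he
      have he' : e'.1.1 = x := by simpa using he'
      exact Subtype.ext (Prod.ext (he.trans he'.symm) h)
  have ex : ∀ x, #{e : E | e.1.1 = x} ≤ 3 := by
    intro x
    by_cases hx : x ∈ X
    · rw [← hX x hx, ← SimpleGraph.card_neighborFinset_eq_degree]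
      exact exg x hx _ (fun y _ h _ => by simpa using h)
    · rw [Finset.filter_false_of_mem]
      · simp
      · rintro e - rfl; exact hx e.2.1
  have eD : ∀ x, (∃ y ∈ Y, m y = x) → #{e : E | e.1.1 = x} ≤ 2 := by
    rintro x ⟨y, hy, rfl⟩
    have hx : m y ∈ X := hYX y hy _ (hm1 y hy)
    have h1 : #((G.neighborFinset (m y)).erase y) = 2 := by
      rw [Finset.card_erase_of_mem (by simpa using (hm1 y hy).symm),
        SimpleGraph.card_neighborFinset_eq_degree, hX _ hx]
    rw [← h1]
    apply exg _ hx
    intro y' hy' h h'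
    simp only [Finset.mem_erase, SimpleGraph.mem_neighborFinset]
    exact ⟨fun e => h' (by rw [e]), h⟩
  obtain ⟨s, r, h1, h2, h3⟩ := split_four (fun e : E => e.1.1) (fun e : E => e.1.2)
    (fun x => ∃ y ∈ Y, m y = x) ey ex eD
  let k : E → ℕ := fun e => 2 * (s e).toNat + (r e).toNat
  have hk4 : ∀ e, k e < 4 := by
    intro e; simp only [k]; cases s e <;> cases r e <;> simp
  have hks : ∀ e e', k e = k e' → s e = s e' ∧ r e = r e' := by
    intro e e'; simp only [k]
    cases s e <;> cases r e <;> cases s e' <;> cases r e' <;> simp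
  have hk2 : ∀ e, k e / 2 = (s e).toNat := by
    intro e; simp only [k]; cases s e <;> cases r e <;> simp
  let col : V → V → ℕ := fun x y =>
    if h : x ∈ X ∧ y ∈ Y ∧ G.Adj x y ∧ m y ≠ x then k ⟨(x, y), h⟩ else 4
  have hc1 : ∀ x y (h : x ∈ X ∧ y ∈ Y ∧ G.Adj x y ∧ m y ≠ x), col x y = k ⟨(x, y), h⟩ := by
    intro x y h; simp only [col]; rw [dif_pos h]
  have hc2 : ∀ x y, m y = x → col x y = 4 := by
    intro x y h; simp only [col]; rw [dif_neg (fun h' => h'.2.2.2 h)]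
  refine ⟨col, ?_, ?_, ?_, ?_⟩
  · intro x y
    simp only [col]; split_ifs with h
    · have := hk4 ⟨(x, y), h⟩; omega
    · norm_num
  · intro x hx y hy y' hy' ha ha' he
    by_cases hm : m y = x
    · by_cases hm' : m y' = x
      · exact hm2 y hy y' hy' (hm.trans hm'.symm)
      · rw [hc2 x y hm, hc1 x y' ⟨hx, hy', ha', hm'⟩] at he
        have := hk4 ⟨(x, y'), ⟨hx, hy', ha', hm'⟩⟩; omega
    · by_cases hm' : m y' = x
      · rw [hc2 x y' hm', hc1 x y ⟨hx, hy, ha, hm⟩] at he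
        have := hk4 ⟨(x, y), ⟨hx, hy, ha, hm⟩⟩; omega
      · rw [hc1 x y ⟨hx, hy, ha, hm⟩, hc1 x y' ⟨hx, hy', ha', hm'⟩] at he
        obtain ⟨e1, e2⟩ := hks _ _ he
        have := h2 ⟨(x, y), ⟨hx, hy, ha, hm⟩⟩ ⟨(x, y'), ⟨hx, hy', ha', hm'⟩⟩ rfl e1 e2
        exact congrArg (fun e : E => e.1.2) this
  · intro y hy x hx x' hx' ha ha' he
    by_cases hm : m y = x
    · by_cases hm' : m y = x'
      · exact hm.symm.trans hm'
      · rw [hc2 x y hm, hc1 x' y ⟨hx', hy, ha', hm'⟩] at he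
        have := hk4 ⟨(x', y), ⟨hx', hy, ha', hm'⟩⟩; omega
    · by_cases hm' : m y = x'
      · rw [hc2 x' y hm', hc1 x y ⟨hx, hy, ha, hm⟩] at he
        have := hk4 ⟨(x, y), ⟨hx, hy, ha, hm⟩⟩; omega
      · rw [hc1 x y ⟨hx, hy, ha, hm⟩, hc1 x' y ⟨hx', hy, ha', hm'⟩] at he
        obtain ⟨e1, e2⟩ := hks _ _ he
        have := h1 ⟨(x, y), ⟨hx, hy, ha, hm⟩⟩ ⟨(x', y), ⟨hx', hy, ha', hm'⟩⟩ rfl e1 e2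
        exact congrArg (fun e : E => e.1.1) this
  · intro x hx y hy y' hy' y'' hy'' ha ha' ha'' h4 h4' h4''
    have hm : m y = x := by
      by_contra hm
      rw [hc1 x y ⟨hx, hy, ha, hm⟩] at h4
      have := hk4 ⟨(x, y), ⟨hx, hy, ha, hm⟩⟩; omega
    have hm' : m y' ≠ x := fun h => h4' (hc2 _ _ h)
    have hm'' : m y'' ≠ x := fun h => h4'' (hc2 _ _ h)
    rw [hc1 x y' ⟨hx, hy', ha', hm'⟩, hc1 x y'' ⟨hx, hy'', ha'', hm''⟩, hk2, hk2]
    rw [h3 ⟨(x, y'), ⟨hx, hy', ha', hm'⟩⟩ ⟨(x, y''), ⟨hx, hy'', ha'', hm''⟩⟩ rfl ⟨y, hy, hm⟩]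

theorem upper {V : Type*} [Fintype V]
    (G : SimpleGraph V) [DecidableRel G.Adj] (hG : IsBiregular G 3 5) :
    ∃ c : Sym2 V → ℕ, IsProperEdgeColoring G c ∧ (Set.range (palette G c)).ncard ≤ 7 := by
  classical
  obtain ⟨X, Y, hXn, hYn, hd, hcov, hadj, hX, hY⟩ := hG
  have hXY : ∀ x ∈ X, ∀ y, G.Adj x y → y ∈ Y := by
    intro x hx y h
    rcases hadj x y h with h | h
    · exact h.2
    · exact absurd h.1 (Finset.disjoint_left.1 hd hx)
  have hYX : ∀ x ∈ Y, ∀ y, G.Adj x y → y ∈ X := by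
    intro x hx y h
    rcases hadj x y h with h | h
    · exact absurd hx (Finset.disjoint_left.1 hd h.1)
    · exact h.2
  obtain ⟨col, k0, k1, k2, k3⟩ := exists_col G X Y hYX hX hY
  let d : V → V → ℕ := fun v w => if v ∈ X ∧ w ∈ Y then col v w else 0
  let c : Sym2 V → ℕ := Sym2.lift ⟨fun v w => d v w + d w v, fun v w => add_comm _ _⟩
  have hcx : ∀ x ∈ X, ∀ y ∈ Y, c s(x, y) = col x y := by
    intro x hx y hy
    have : y ∉ X := Finset.disjoint_right.1 hd hy
    simp [c, d, hx, hy, this]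
  have hcy : ∀ x ∈ X, ∀ y ∈ Y, c s(y, x) = col x y := by
    intro x hx y hy; rw [Sym2.eq_swap]; exact hcx x hx y hy
  have hc : IsProperEdgeColoring G c := by
    rintro e₁ he₁ e₂ he₂ hne ⟨v, hv1, hv2⟩ heq
    obtain ⟨a, rfl⟩ := Sym2.mem_iff_exists.1 hv1
    obtain ⟨b, rfl⟩ := Sym2.mem_iff_exists.1 hv2
    have ha : G.Adj v a := he₁
    have hb : G.Adj v b := he₂
    apply hne
    rcases hcov v with hv | hv
    · have ha' := hXY v hv a ha
      have hb' := hXY v hv b hb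
      rw [hcx v hv a ha', hcx v hv b hb'] at heq
      rw [k1 v hv a ha' b hb' ha hb heq]
    · have ha' := hYX v hv a ha
      have hb' := hYX v hv b hb
      rw [hcy a ha' v hv, hcy b hb' v hv] at heq
      rw [k2 v hv a ha' b hb' ha.symm hb.symm heq]
  refine ⟨c, hc, ?_⟩
  choose pal hpal hpc using palette_fin hc
  have hm : ∀ v n, n ∈ pal v ↔ ∃ w, G.Adj v w ∧ c s(v, w) = n := by
    intro v n; rw [← Finset.mem_coe, hpal, mem_palette]
  have h5 : ∀ v, pal v ⊆ Finset.range 5 := by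
    intro v n hn
    obtain ⟨w, hw, rfl⟩ := (hm v n).1 hn
    rw [Finset.mem_range]
    rcases hadj v w hw with h | h
    · rw [hcx v h.1 w h.2]; exact k0 _ _
    · rw [hcy w h.2 v h.1]; exact k0 _ _
  let T : Finset (Finset ℕ) := insert (Finset.range 5)
    ((Finset.powersetCard 3 (Finset.range 5)).filter
      (fun P => 4 ∈ P → ∀ a ∈ P, ∀ b ∈ P, a ≠ 4 → b ≠ 4 → a / 2 = b / 2))
  have hT : #T ≤ 7 := by decide
  have hpT : ∀ v, pal v ∈ T := by
    intro v
    rcases hcov v with hv | hv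
    · apply Finset.mem_insert_of_mem
      rw [Finset.mem_filter, Finset.mem_powersetCard]
      refine ⟨⟨h5 v, (hpc v).trans (hX v hv)⟩, ?_⟩
      intro h4 a ha b hb
      obtain ⟨w, hw, h4⟩ := (hm v _).1 h4
      obtain ⟨wa, hwa, rfl⟩ := (hm v _).1 ha
      obtain ⟨wb, hwb, rfl⟩ := (hm v _).1 hb
      have i := hXY v hv w hw
      have ia := hXY v hv wa hwa
      have ib := hXY v hv wb hwb
      rw [hcx v hv w i] at h4
      rw [hcx v hv wa ia, hcx v hv wb ib]
      exact k3 v hv w i wa ia wb ib hw hwa hwb h4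
    · have : pal v = Finset.range 5 :=
        Finset.eq_of_subset_of_card_le (h5 v) (by rw [hpc v, hY v hv]; simp)
      rw [this]; exact Finset.mem_insert_self _ _
  refine le_trans ?_ hT
  rw [← Set.ncard_coe_finset T, ← Set.ncard_image_of_injective _ Finset.coe_injective]
  apply Set.ncard_le_ncard _ (Set.toFinite _)
  rintro _ ⟨v, rfl⟩
  exact ⟨pal v, hpT v, hpal v⟩

/-- If `G` is `(3,5)`-biregular, then `5 ≤ š(G) ≤ 7`. -/
theorem palette_index_three_five_biregular {V : Type*} [Fintype V]
    (G : SimpleGraph V) [DecidableRel G.Adj]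
    (hG : IsBiregular G 3 5) :
    5 ≤ paletteIndex G ∧ paletteIndex G ≤ 7 := by
  obtain ⟨c, hc, h7⟩ := upper G hG
  constructor
  · obtain ⟨c', hc', h⟩ := Nat.sInf_mem (s := {k | ∃ c : Sym2 V → ℕ, IsProperEdgeColoring G c ∧
      (Set.range (palette G c)).ncard = k}) ⟨_, c, hc, rfl⟩
    have := lower G hG c' hc'
    rw [h] at this
    exact this
  · refine le_trans (Nat.sInf_le ?_) h7
    exact ⟨c, hc, rfl⟩
end
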